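/- A finitely generated group G is left-orderable and all of its positive cones are regular (with respect to some, equivalently any, finite generating set of G) if and only if G admits a subnormal series G = G₀ ⊵ G₁ ⊵ … ⊵ Gₙ = {1} such that each quotient G_i/G_{i+1} is infinite cyclic and each quotient G_i/G_{i+2} (for i ≤ n−2) is isomorphic to the Klein bottle group K = ⟨a, b | a b a⁻¹ = b⁻¹⟩. -/

import Mathlib

/-!
A regular cone is described by a finite automaton and a finite list of group elements, so a group all
of whose positive cones are regular has only countably many of them. This countability carries the
forward direction. The cones form a compact countable space on which `G` acts by conjugation; by
Baire's theorem a minimal closed invariant subset is a finite orbit (`exists_cone_finiteIndex`), so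
some cone is normalized by a subgroup of finite index. That subgroup is bi-ordered by it, Hölder's
construction gives it a homomorphism to `ℝ`, and the transfer of this homomorphism is a nontrivial
homomorphism `G → ℝ`; as `G` is finitely generated, it maps onto `ℤ`
(`AllConesRegular.exists_surjective_int`). The kernel again has only regular cones, since an automaton
for a lexicographic cone stays near the kernel while reading words of kernel value
(`AllConesRegular.ker`). Iterating gives a descending chain with infinite cyclic factors. It reaches
the trivial group, because an infinite chain would allow independent choices of signs, hence
uncountably many cones (`not_countable_of_chain`). Finally, a two-step quotient is an extension of `ℤ`
by `ℤ`, and it is not `ℤ²`, because two independent homomorphisms to `ℤ` yield a cone for every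
irrational slope (`proportional_of_countable`); so it is the Klein bottle group (`exists_klein_hom`).

For the converse, each term of the series acts on the next factor through inversion. Let `u ∈ P`
generate the `i`-th factor and suppose that, on the next term, `P` contains all elements of positive
sign. For `c` of negative sign there, `c u = u (u⁻¹ c u)` is a product of positive elements, and it
follows that the whole coset of `u` lies in `P` (`exists_sign`). So `P` is lexicographic, and it is
regular by descending along the series: the elements of positive image are represented by the words
that use `u` but not `u⁻¹` (`IsRegularIn.step`).
-/

/-- A positive cone on a group `G`: a subsemigroup `P` such that
`G = P ⊔ P⁻¹ ⊔ {1}` is a disjoint union. -/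
def IsPositiveCone {G : Type*} [Group G] (P : Set G) : Prop :=
  (∀ a ∈ P, ∀ b ∈ P, a * b ∈ P) ∧
  (∀ g : G, g ∈ P ∨ g⁻¹ ∈ P ∨ g = 1) ∧
  (∀ g ∈ P, g⁻¹ ∉ P) ∧ (1 : G) ∉ P

/-- A positive cone on `G` relative to a subgroup `H`: a subsemigroup `P` with
`G = P ⊔ H ⊔ P⁻¹` a disjoint union. -/
def IsRelPositiveCone {G : Type*} [Group G] (H : Subgroup G) (P : Set G) : Prop :=
  (∀ a ∈ P, ∀ b ∈ P, a * b ∈ P) ∧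
  (∀ g : G, g ∈ P ∨ g⁻¹ ∈ P ∨ g ∈ H) ∧
  (∀ g ∈ P, g⁻¹ ∉ P) ∧ (∀ g ∈ P, g ∉ H)

/-- A positive cone of the subgroup `H`, viewed as a subset of the ambient group `G`. -/
def IsPositiveConeIn {G : Type*} [Group G] (H : Subgroup G) (P : Set G) : Prop :=
  P ⊆ (H : Set G) ∧
  (∀ a ∈ P, ∀ b ∈ P, a * b ∈ P) ∧
  (∀ h ∈ H, h ∈ P ∨ h⁻¹ ∈ P ∨ h = 1) ∧
  (∀ g ∈ P, g⁻¹ ∉ P) ∧ (1 : G) ∉ P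

/-- The evaluation (image) in `G` of a language `L ⊆ X*` under a monoid
homomorphism `π : X* → G`. -/
def evalLang {X : Type*} {G : Type*} [Group G] (π : FreeMonoid X →* G) (L : Language X) :
    Set G :=
  (fun w : List X => π (FreeMonoid.ofList w)) '' L

/-- `S ⊆ G` is the evaluation of a regular language over some finite generating set of `G`. -/
def HasRegularConeEval {G : Type*} [Group G] (S : Set G) : Prop :=
  ∃ (X : Type) (_ : Fintype X) (π : FreeMonoid X →* G),
    Function.Surjective π ∧ ∃ L : Language X, L.IsRegular ∧ evalLang π L = S

/-- The single relator `a b a⁻¹ b` of the Klein bottle group, in the free group on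
`Bool` with `true ↦ a` and `false ↦ b`. -/
def kleinRels : Set (FreeGroup Bool) :=
  {FreeGroup.of true * FreeGroup.of false * (FreeGroup.of true)⁻¹ * FreeGroup.of false}

/-- The Klein bottle group `K = ⟨a, b ∣ a b a⁻¹ = b⁻¹⟩`. -/
def KleinBottleGroup : Type := PresentedGroup kleinRels

instance : Group KleinBottleGroup := inferInstanceAs (Group (PresentedGroup kleinRels))

/-! ### Positive cones from homomorphisms to ordered groups -/

/-- `B` is the kernel of an epimorphism `f` from `A` onto `ℤ`. The map `f` is defined on the whole
ambient group `G`, with no condition outside `A`, so that the terms of a subnormal series need not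
be treated as separate types. -/
structure IsZStep {G : Type*} [Group G] (A B : Subgroup G) (f : G → ℤ) : Prop where
  le : B ≤ A
  mul : ∀ x ∈ A, ∀ y ∈ A, f (x * y) = f x + f y
  zero_iff : ∀ x ∈ A, (f x = 0 ↔ x ∈ B)
  surj : ∃ t ∈ A, f t = 1

/-- `G` is left-orderable and each of its positive cones is regular. -/
def AllConesRegular (G : Type*) [Group G] : Prop :=
  (∃ P : Set G, IsPositiveCone P) ∧ ∀ P : Set G, IsPositiveCone P → HasRegularConeEval P

section Cones

variable {G : Type*} [Group G]

/-- A lexicographic cone on a chain `s 0 ≥ s 1 ≥ …`: an element outside the intersection has the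
sign of `f i` at the last `i` with `g ∈ s i`, and `P₀` orders the intersection. -/
lemma isPositiveCone_of_chain (s : ℕ → Subgroup G) (f : ℕ → G → ℤ) (h0 : s 0 = ⊤)
    (anti : Antitone s)
    (mul : ∀ i, ∀ x ∈ s i, ∀ y ∈ s i, f i (x * y) = f i x + f i y)
    (zero : ∀ i, ∀ x ∈ s i, (f i x = 0 ↔ x ∈ s (i + 1)))
    (P₀ : Set G) (hP₀ : IsPositiveConeIn (⨅ i, s i) P₀) :
    IsPositiveCone {g | (∃ i, g ∈ s i ∧ 0 < f i g) ∨ g ∈ P₀} := by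
  obtain ⟨hsub, hmul, htri, hasym, hone⟩ := hP₀
  have hinf : ∀ g ∈ P₀, ∀ i, g ∈ s i := fun g hg i => by
    have := hsub hg
    simp only [SetLike.mem_coe, Subgroup.mem_iInf] at this
    exact this i
  have hf0 : ∀ i j, i < j → ∀ g ∈ s j, f i g = 0 := fun i j hij g hg =>
    (zero i g (anti hij.le hg)).2 (anti hij hg)
  have hf1 : ∀ i, f i 1 = 0 := fun i => (zero i 1 (one_mem _)).2 (one_mem _)
  have hinv : ∀ i, ∀ g ∈ s i, f i g⁻¹ = - f i g := fun i g hg => by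
    have := mul i g hg g⁻¹ (inv_mem hg)
    rw [mul_inv_cancel, hf1] at this
    omega
  refine ⟨?_, ?_, ?_, ?_⟩
  · rintro a (⟨i, hi, hai⟩ | ha) b (⟨j, hj, hbj⟩ | hb)
    · left
      rcases lt_trichotomy i j with h | rfl | h
      · exact ⟨i, mul_mem hi (anti h.le hj), by
          rw [mul i a hi b (anti h.le hj), hf0 i j h b hj]; omega⟩
      · exact ⟨i, mul_mem hi hj, by rw [mul i a hi b hj]; omega⟩
      · exact ⟨j, mul_mem (anti h.le hi) hj, by
          rw [mul j a (anti h.le hi) b hj, hf0 j i h a hi]; omega⟩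
    · exact Or.inl ⟨i, mul_mem hi (hinf b hb i), by
        rw [mul i a hi b (hinf b hb i), hf0 i (i + 1) (by omega) b (hinf b hb _)]; omega⟩
    · exact Or.inl ⟨j, mul_mem (hinf a ha j) hj, by
        rw [mul j a (hinf a ha j) b hj, hf0 j (j + 1) (by omega) a (hinf a ha _)]; omega⟩
    · exact Or.inr (hmul a ha b hb)
  · intro g
    by_cases hg : ∀ i, g ∈ s i
    · rcases htri g (by simpa [Subgroup.mem_iInf] using hg) with h | h | h
      · exact Or.inl (Or.inr h)
      · exact Or.inr (Or.inl (Or.inr h))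
      · exact Or.inr (Or.inr h)
    · push Not at hg
      obtain ⟨n, hn⟩ := hg
      have : ∃ i, g ∈ s i ∧ g ∉ s (i + 1) := by
        by_contra! hc
        apply hn
        clear hn
        induction n with
        | zero => rw [h0]; trivial
        | succ k ih => exact hc k ih
      obtain ⟨i, hi, hi'⟩ := this
      have hne : f i g ≠ 0 := fun h => hi' ((zero i g hi).1 h)
      rcases lt_or_gt_of_ne hne with h | h
      · exact Or.inr (Or.inl (Or.inl ⟨i, inv_mem hi, by rw [hinv i g hi]; omega⟩))
      · exact Or.inl (Or.inl ⟨i, hi, h⟩)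
  · rintro g (⟨i, hi, hgi⟩ | hg) (⟨j, hj, hgj⟩ | hg')
    · have hj' := inv_mem hj
      rw [inv_inv] at hj'
      rw [hinv j g hj'] at hgj
      rcases lt_trichotomy i j with h | rfl | h
      · rw [hf0 i j h g hj'] at hgi; omega
      · omega
      · rw [hf0 j i h g hi] at hgj; omega
    · have := hinf _ hg' (i + 1)
      rw [inv_mem_iff] at this
      rw [hf0 i (i + 1) (by omega) g this] at hgi; omega
    · rw [hf0 j (j + 1) (by omega) g⁻¹ (inv_mem (hinf g hg _))] at hgj; omega
    · exact hasym g hg hg'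
  · rintro (⟨i, hi, h⟩ | h)
    · rw [hf1] at h; omega
    · exact hone h

/-- The lexicographic cone of a homomorphism `f` to `ℝ` and a cone of its kernel. -/
lemma isPositiveCone_lex (K : Subgroup G) (f : G → ℝ)
    (mul : ∀ x y, f (x * y) = f x + f y) (zero : ∀ x, f x = 0 ↔ x ∈ K)
    (P₀ : Set G) (hP₀ : IsPositiveConeIn K P₀) :
    IsPositiveCone {g | 0 < f g ∨ g ∈ P₀} := by
  obtain ⟨hsub, hmul, htri, hasym, hone⟩ := hP₀
  have h1 : f 1 = 0 := (zero 1).2 (one_mem _)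
  have hinv : ∀ g, f g⁻¹ = - f g := fun g => by
    have := mul g g⁻¹
    rw [mul_inv_cancel, h1] at this
    linarith
  have hz : ∀ g ∈ P₀, f g = 0 := fun g hg => (zero g).2 (hsub hg)
  refine ⟨?_, ?_, ?_, ?_⟩
  · rintro a (ha | ha) b (hb | hb)
    · left; rw [mul]; linarith
    · left; rw [mul, hz b hb]; linarith
    · left; rw [mul, hz a ha]; linarith
    · exact Or.inr (hmul a ha b hb)
  · intro g
    rcases lt_trichotomy (f g) 0 with h | h | h
    · exact Or.inr (Or.inl (Or.inl (by rw [hinv]; linarith)))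
    · rcases htri g ((zero g).1 h) with h | h | h
      · exact Or.inl (Or.inr h)
      · exact Or.inr (Or.inl (Or.inr h))
      · exact Or.inr (Or.inr h)
    · exact Or.inl (Or.inl h)
  · rintro g (h | h) (h' | h')
    · rw [hinv] at h'; linarith
    · have := hz _ h'
      rw [hinv] at this; linarith
    · rw [hinv, hz g h] at h'; linarith
    · exact hasym g h h'
  · rintro (h | h)
    · rw [h1] at h; exact lt_irrefl _ h
    · exact hone h

/-- The trace of a positive cone on a subgroup. -/
lemma IsPositiveCone.inter {P : Set G} (hP : IsPositiveCone P) (K : Subgroup G) :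
    IsPositiveConeIn K (P ∩ K) := by
  obtain ⟨hmul, htri, hasym, hone⟩ := hP
  refine ⟨Set.inter_subset_right, fun a ha b hb => ⟨hmul a ha.1 b hb.1, mul_mem ha.2 hb.2⟩,
    fun h hh => ?_, fun g hg hg' => hasym g hg.1 hg'.1, fun h => hone h.1⟩
  rcases htri h with h' | h' | h'
  · exact Or.inl ⟨h', hh⟩
  · exact Or.inr (Or.inl ⟨h', inv_mem hh⟩)
  · exact Or.inr (Or.inr h')

/-- Two linearly independent homomorphisms to `ℤ` produce one positive cone for each irrational
slope, so they cannot coexist with countability. -/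
lemma proportional_of_countable (hcount : {P : Set G | IsPositiveCone P}.Countable)
    (hne : ∃ P : Set G, IsPositiveCone P) (f₁ f₂ : G → ℤ)
    (mul₁ : ∀ x y, f₁ (x * y) = f₁ x + f₁ y) (mul₂ : ∀ x y, f₂ (x * y) = f₂ x + f₂ y)
    (c₁ c₂ : G) : f₁ c₁ * f₂ c₂ = f₁ c₂ * f₂ c₁ := by
  by_contra hdet
  obtain ⟨P, hP⟩ := hne
  let F₁ : G →* Multiplicative ℤ :=
    MonoidHom.mk' (fun x => Multiplicative.ofAdd (f₁ x)) (fun x y => by rw [mul₁]; rfl)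
  let F₂ : G →* Multiplicative ℤ :=
    MonoidHom.mk' (fun x => Multiplicative.ofAdd (f₂ x)) (fun x y => by rw [mul₂]; rfl)
  let K : Subgroup G := F₁.ker ⊓ F₂.ker
  have hK : ∀ x, x ∈ K ↔ f₁ x = 0 ∧ f₂ x = 0 := fun x => by
    simp only [K, Subgroup.mem_inf, MonoidHom.mem_ker]
    exact Iff.rfl
  -- the cone of the half-plane of irrational slope `α`, refined by `P` on the common kernel
  let Q : ℝ → Set G := fun α => {g | 0 < (f₁ g : ℝ) + α * f₂ g ∨ g ∈ P ∩ K}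
  have hQ : ∀ α : ℝ, Irrational α → IsPositiveCone (Q α) := fun α hα => by
    refine isPositiveCone_lex K (fun g => (f₁ g : ℝ) + α * f₂ g) ?_ ?_ _ (hP.inter K)
    · intro x y
      simp only [mul₁, mul₂]; push_cast; ring
    · intro x
      rw [hK]
      constructor
      · intro h
        by_cases h2 : f₂ x = 0
        · refine ⟨?_, h2⟩
          simpa [h2] using h
        · exfalso
          apply hα
          refine ⟨-(f₁ x : ℚ) / f₂ x, ?_⟩
          have : (f₂ x : ℝ) ≠ 0 := by exact_mod_cast h2
          push_cast
          field_simp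
          linarith
      · rintro ⟨h1, h2⟩
        simp [h1, h2]
  have hpow : ∀ (f : G → ℤ), (∀ x y, f (x * y) = f x + f y) → ∀ x (n : ℤ), f (x ^ n) = n * f x := by
    intro f hf x n
    let F : G →* Multiplicative ℤ :=
      MonoidHom.mk' (fun x => Multiplicative.ofAdd (f x)) (fun x y => by rw [hf]; rfl)
    have := congrArg Multiplicative.toAdd (map_zpow F x n)
    simpa [F] using this
  have hsep : ∀ α β : ℝ, α < β → Q α ≠ Q β := by
    intro α β hαβ heq
    obtain ⟨r, hr1, hr2⟩ := exists_rat_btwn hαβ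
    -- An element whose pair of values is a positive multiple of `(-p, q)`, where `r = p / q`.
    set d := f₁ c₁ * f₂ c₂ - f₁ c₂ * f₂ c₁ with hd
    have hd0 : d ≠ 0 := sub_ne_zero.2 hdet
    set p : ℤ := r.num
    set q : ℤ := (↑r.den : ℤ)
    have hq : (0 : ℝ) < q := by simp only [q]; exact_mod_cast r.den_pos
    have hrpq : (r : ℝ) = p / q := by
      simp only [p, q]; exact_mod_cast (Rat.num_div_den r).symm
    let c := c₁ ^ (d * (-p * f₂ c₂ - q * f₁ c₂)) * c₂ ^ (d * (q * f₁ c₁ + p * f₂ c₁))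
    have e1 : f₁ c = -p * d ^ 2 := by
      simp only [c, mul₁, hpow f₁ mul₁, hd]; ring
    have e2 : f₂ c = q * d ^ 2 := by
      simp only [c, mul₂, hpow f₂ mul₂, hd]; ring
    have hd2 : (0 : ℝ) < (d : ℝ) ^ 2 := by
      have : (d : ℝ) ≠ 0 := by exact_mod_cast hd0
      positivity
    have hval : ∀ γ : ℝ, (f₁ c : ℝ) + γ * f₂ c = (γ - r) * (q * d ^ 2) := fun γ => by
      rw [e1, e2, hrpq]; push_cast; field_simp; ring
    have hβ : c ∈ Q β := Or.inl (by rw [hval]; have : 0 < β - r := by linarith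
                                    positivity)
    rw [← heq] at hβ
    rcases hβ with h | h
    · rw [hval] at h
      have : (α - r) * (q * d ^ 2) < 0 := mul_neg_of_neg_of_pos (by linarith) (by positivity)
      linarith
    · have := ((hK c).1 h.2).2
      rw [e2] at this
      have h' : (q : ℝ) * d ^ 2 = 0 := by exact_mod_cast this
      have : 0 < (q : ℝ) * d ^ 2 := by positivity
      linarith
  have hinj : Set.InjOn Q {α | Irrational α} := by
    intro α _ β _ h
    by_contra hne
    rcases lt_or_gt_of_ne hne with h' | h'
    · exact hsep α β h' h
    · exact hsep β α h' h.symm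
  have hirr : {α : ℝ | Irrational α}.Countable :=
    Set.MapsTo.countable_of_injOn (fun α hα => hQ α hα) hinj hcount
  have huniv : (Set.univ : Set ℝ).Countable := by
    refine (hirr.union (Set.countable_range ((↑) : ℚ → ℝ))).mono fun x _ => ?_
    by_cases hx : Irrational x
    · exact Or.inl hx
    · exact Or.inr (by simpa [Irrational] using hx)
  exact Cardinal.not_countable_real huniv

/-- An infinite chain with infinite cyclic steps carries a positive cone for each choice of signs,
hence uncountably many. -/
lemma not_countable_of_chain (s : ℕ → Subgroup G) (f : ℕ → G → ℤ) (h0 : s 0 = ⊤)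
    (hs : ∀ i, IsZStep (s i) (s (i + 1)) (f i)) (hne : ∃ P : Set G, IsPositiveCone P) :
    ¬ {P : Set G | IsPositiveCone P}.Countable := by
  intro hcount
  obtain ⟨P, hP⟩ := hne
  have anti : Antitone s := antitone_nat_of_succ_le fun i => (hs i).le
  let σ : Bool → ℤ := fun b => if b then 1 else -1
  let Q : (ℕ → Bool) → Set G := fun ε =>
    {g | (∃ i, g ∈ s i ∧ 0 < σ (ε i) * f i g) ∨ g ∈ P ∩ ↑(⨅ i, s i)}
  have hQ : ∀ ε, IsPositiveCone (Q ε) := fun ε => by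
    refine isPositiveCone_of_chain s (fun i g => σ (ε i) * f i g) h0 anti ?_ ?_ _ (hP.inter _)
    · intro i x hx y hy
      rw [(hs i).mul x hx y hy, mul_add]
    · intro i x hx
      rw [← (hs i).zero_iff x hx]
      cases ε i <;> simp [σ]
  -- the signs are recovered from the cone by testing it on the generators
  have key : ∀ ε i, ∀ t ∈ s i, f i t = 1 → (t ∈ Q ε ↔ ε i = true) := by
    intro ε i t ht ht1
    have hnot : t ∉ s (i + 1) := fun h => by
      rw [((hs i).zero_iff t ht).2 h] at ht1; omega
    constructor
    · rintro (⟨j, hj, hpos⟩ | h)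
      · have hji : j = i := by
          rcases lt_trichotomy j i with h | h | h
          · rw [((hs j).zero_iff t hj).2 (anti h ht)] at hpos; simp at hpos
          · exact h
          · exact absurd (anti h hj) hnot
        subst hji
        rw [ht1] at hpos
        by_contra hb
        simp only [Bool.not_eq_true] at hb
        simp [hb, σ] at hpos
      · exact absurd ((Subgroup.mem_iInf.1 h.2) (i + 1)) hnot
    · intro hb
      exact Or.inl ⟨i, ht, by simp [hb, σ, ht1]⟩
  have hinj : Function.Injective Q := by
    intro ε δ h
    funext i
    obtain ⟨t, ht, ht1⟩ := (hs i).surj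
    have h1 := key ε i t ht ht1
    have h2 := key δ i t ht ht1
    rw [h] at h1
    have := h1.symm.trans h2
    cases hε : ε i <;> cases hδ : δ i <;> simp_all
  have : (Set.univ : Set (ℕ → Bool)).Countable :=
    Set.MapsTo.countable_of_injOn (fun ε _ => hQ ε) hinj.injOn hcount
  rw [Set.countable_univ_iff, ← Cardinal.mk_le_aleph0_iff] at this
  have h2 : Cardinal.mk (ℕ → Bool) = Cardinal.continuum := by simp
  rw [h2] at this
  exact absurd this (not_le.2 Cardinal.aleph0_lt_continuum)

end Cones

/-! ### Epimorphisms onto `ℤ` from order-preserving actions -/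

section Hoelder

lemma zpow_le_zpow_iff_of_one_lt {H : Type*} [Group H] [LinearOrder H] [MulLeftMono H] {h : H}
    (h1 : 1 < h) {p q : ℤ} : h ^ p ≤ h ^ q ↔ p ≤ q := by
  have hlt : ∀ p q : ℤ, p < q → h ^ p < h ^ q := fun p q hpq => by
    obtain ⟨n, rfl⟩ : ∃ n : ℕ, q = p + (n + 1 : ℕ) := ⟨(q - p - 1).toNat, by omega⟩
    rw [zpow_add, zpow_natCast]
    exact lt_mul_of_one_lt_right' _ (one_lt_pow' h1 n.succ_ne_zero)
  constructor
  · intro h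
    by_contra hc
    exact absurd (hlt q p (not_le.1 hc)) (not_lt.2 h)
  · intro h
    rcases h.lt_or_eq with h | rfl
    · exact (hlt _ _ h).le
    · exact le_rfl

/-- In a bi-ordered group a product of powers lies within the two rearrangements; this is what makes
the Hölder translation number additive without commutativity. -/
lemma mul_pow_le_of_mul_le {H : Type*} [Group H] [LinearOrder H] [MulLeftMono H] [MulRightMono H]
    {x y : H} (h : x * y ≤ y * x) (q : ℕ) :
    x ^ q * y ^ q ≤ (x * y) ^ q ∧ (x * y) ^ q ≤ y ^ q * x ^ q := by
  have h1 : ∀ n : ℕ, x * y ^ n ≤ y ^ n * x := fun n => by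
    induction n with
    | zero => simp
    | succ n ih =>
      calc x * y ^ (n + 1) = (x * y ^ n) * y := by rw [pow_succ, mul_assoc]
        _ ≤ (y ^ n * x) * y := by gcongr
        _ = y ^ n * (x * y) := mul_assoc _ _ _
        _ ≤ y ^ n * (y * x) := by gcongr
        _ = y ^ (n + 1) * x := by rw [pow_succ, mul_assoc]
  have h2 : ∀ n : ℕ, x ^ n * y ≤ y * x ^ n := fun n => by
    induction n with
    | zero => simp
    | succ n ih =>
      calc x ^ (n + 1) * y = x * (x ^ n * y) := by rw [pow_succ', mul_assoc]
        _ ≤ x * (y * x ^ n) := by gcongr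
        _ = (x * y) * x ^ n := (mul_assoc _ _ _).symm
        _ ≤ (y * x) * x ^ n := by gcongr
        _ = y * x ^ (n + 1) := by rw [pow_succ', mul_assoc]
  induction q with
  | zero => simp
  | succ q ih =>
    constructor
    · calc x ^ (q + 1) * y ^ (q + 1) = x ^ q * (x * y ^ q) * y := by
            rw [pow_succ, pow_succ]; group
        _ ≤ x ^ q * (y ^ q * x) * y := mul_le_mul_left (mul_le_mul_right (h1 q) _) _
        _ = (x ^ q * y ^ q) * (x * y) := by group
        _ ≤ (x * y) ^ q * (x * y) := by gcongr; exact ih.1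
        _ = (x * y) ^ (q + 1) := (pow_succ _ _).symm
    · calc (x * y) ^ (q + 1) = (x * y) * (x * y) ^ q := pow_succ' _ _
        _ ≤ (x * y) * (y ^ q * x ^ q) := by gcongr; exact ih.2
        _ = (x * y ^ (q + 1)) * x ^ q := by rw [pow_succ']; group
        _ ≤ (y ^ (q + 1) * x) * x ^ q := mul_le_mul_left (h1 _) _
        _ = y ^ (q + 1) * x ^ (q + 1) := by rw [pow_succ' x, mul_assoc]

/-- Hölder's theorem for a bi-ordered group with a cofinal element `h`: comparing powers with
powers of `h` gives a homomorphism to the reals. -/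
lemma exists_hoelder_hom {H : Type*} [Group H] [LinearOrder H] [MulLeftMono H] [MulRightMono H]
    (h : H) (h1 : 1 < h) (hcof : ∀ g : H, ∃ n : ℕ, g ≤ h ^ n) :
    ∃ τ : H →* Multiplicative ℝ, ∀ (g : H) (p : ℤ) (q : ℕ), 0 < q → h ^ p ≤ g ^ q →
      (p : ℝ) / q ≤ (τ g).toAdd := by
  have hmono : ∀ p q : ℤ, h ^ p ≤ h ^ q ↔ p ≤ q := fun p q =>
    zpow_le_zpow_iff_of_one_lt h1
  have hpm : ∀ (x y : H) (n : ℕ), x ≤ y → x ^ n ≤ y ^ n := fun x y n hxy => pow_le_pow_left' hxy n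
  have hlow : ∀ g : H, ∃ n : ℕ, h ^ (-(n : ℤ)) ≤ g := fun g => by
    obtain ⟨n, hn⟩ := hcof g⁻¹
    refine ⟨n, ?_⟩
    rw [zpow_neg, zpow_natCast]
    exact inv_le_of_inv_le' hn
  have hfloor : ∀ g : H, ∃ k : ℤ, h ^ k ≤ g ∧ g ≤ h ^ (k + 1) := fun g => by
    obtain ⟨n, hn⟩ := hcof g
    obtain ⟨m, hm⟩ := hlow g
    obtain ⟨k, hk, hk'⟩ := Int.exists_greatest_of_bdd (P := fun k : ℤ => h ^ k ≤ g)
      ⟨n, fun z hz => by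
        rw [← hmono]; exact hz.trans (by rwa [zpow_natCast])⟩ ⟨_, hm⟩
    refine ⟨k, hk, ?_⟩
    by_contra hc
    have := hk' (k + 1) (not_le.1 hc).le
    omega
  have hcmp : ∀ (g : H) (p : ℤ) (q : ℕ) (p' : ℤ) (q' : ℕ), 0 < q → 0 < q' → h ^ p ≤ g ^ q →
      g ^ q' ≤ h ^ p' → (p : ℝ) / q ≤ p' / q' := by
    intro g p q p' q' hq hq' hle hle'
    have e1 := hpm _ _ q' hle
    have e2 := hpm _ _ q hle'
    rw [← pow_mul] at e1 e2
    rw [mul_comm q' q] at e2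
    have e3 := e1.trans e2
    rw [← zpow_natCast, ← zpow_natCast, ← zpow_mul, ← zpow_mul, hmono] at e3
    rw [div_le_div_iff₀ (by exact_mod_cast hq) (by exact_mod_cast hq')]
    exact_mod_cast e3
  -- `sInf (U g)` is the translation number of `g` relative to `h`
  let U : H → Set ℝ := fun g => {r | ∃ (p : ℤ) (q : ℕ), 0 < q ∧ g ^ q ≤ h ^ p ∧ r = (p : ℝ) / q}
  have hUne : ∀ g, (U g).Nonempty := fun g => by
    obtain ⟨n, hn⟩ := hcof g
    exact ⟨_, n, 1, one_pos, by simpa using hn, rfl⟩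
  have hUbdd : ∀ g, BddBelow (U g) := fun g => by
    obtain ⟨n, hn⟩ := hlow g
    refine ⟨((-(n : ℤ) : ℤ) : ℝ) / (1 : ℕ), ?_⟩
    rintro r ⟨p, q, hq, hle, rfl⟩
    exact hcmp g _ 1 p q one_pos hq (by simpa using hn) hle
  have hup : ∀ (g : H) (p : ℤ) (q : ℕ), 0 < q → g ^ q ≤ h ^ p → sInf (U g) ≤ (p : ℝ) / q :=
    fun g p q hq hle => csInf_le (hUbdd g) ⟨p, q, hq, hle, rfl⟩
  have hlo : ∀ (g : H) (p : ℤ) (q : ℕ), 0 < q → h ^ p ≤ g ^ q → (p : ℝ) / q ≤ sInf (U g) := by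
    intro g p q hq hle
    refine le_csInf (hUne g) ?_
    rintro r ⟨p', q', hq', hle', rfl⟩
    exact hcmp g p q p' q' hq hq' hle hle'
  -- the defect of additivity is at most `2 / q` for every `q`, by comparing `q`-th powers
  have hadd : ∀ x y, sInf (U (x * y)) = sInf (U x) + sInf (U y) := by
    intro x y
    have hbound : ∀ q : ℕ, 0 < q → |sInf (U (x * y)) - (sInf (U x) + sInf (U y))| ≤ 2 / q := by
      intro q hq
      obtain ⟨k, hk1, hk2⟩ := hfloor (x ^ q)
      obtain ⟨l, hl1, hl2⟩ := hfloor (y ^ q)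
      have b1 : h ^ (k + l) ≤ (x * y) ^ q := by
        rcases le_total (x * y) (y * x) with hxy | hxy
        · rw [zpow_add]
          exact (mul_le_mul' hk1 hl1).trans (mul_pow_le_of_mul_le hxy q).1
        · rw [add_comm, zpow_add]
          exact (mul_le_mul' hl1 hk1).trans
            ((mul_pow_le_of_mul_le hxy q).1.trans ((hpm _ _ q hxy)))
      have b2 : (x * y) ^ q ≤ h ^ (k + l + 2) := by
        rcases le_total (x * y) (y * x) with hxy | hxy
        · rw [show k + l + 2 = (l + 1) + (k + 1) by ring, zpow_add]
          exact (mul_pow_le_of_mul_le hxy q).2.trans (mul_le_mul' hl2 hk2)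
        · rw [show k + l + 2 = (k + 1) + (l + 1) by ring, zpow_add]
          refine le_trans ?_ (mul_le_mul' hk2 hl2)
          -- `(x y)^q = x (y x)^(q-1) y`, to which the comparison for `y x ≤ x y` applies.
          obtain ⟨n, rfl⟩ : ∃ n, q = n + 1 := ⟨q - 1, by omega⟩
          have hconj : ∀ m : ℕ, (x * y) ^ (m + 1) = x * (y * x) ^ m * y := fun m => by
            induction m with
            | zero => simp
            | succ m ih => rw [pow_succ, ih, pow_succ]; group
          rw [hconj]
          calc x * (y * x) ^ n * y ≤ x * (x ^ n * y ^ n) * y := by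
                gcongr; exact (mul_pow_le_of_mul_le hxy n).2
            _ = x ^ (n + 1) * y ^ (n + 1) := by rw [pow_succ' x, pow_succ y]; group
      have u1 := hlo _ _ q hq b1
      have u2 := hup _ _ q hq b2
      have v1 := hlo _ _ q hq hk1
      have v2 := hup _ _ q hq hk2
      have w1 := hlo _ _ q hq hl1
      have w2 := hup _ _ q hq hl2
      push_cast at u1 u2 v1 v2 w1 w2
      simp only [add_div] at u1 u2 v1 v2 w1 w2
      have e : (2 : ℝ) / q = 1 / q + 1 / q := by ring
      rw [abs_le]
      constructor <;> linarith
    by_contra hne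
    have hpos : 0 < |sInf (U (x * y)) - (sInf (U x) + sInf (U y))| :=
      abs_pos.2 (sub_ne_zero.2 hne)
    obtain ⟨n, hn⟩ := exists_nat_gt (2 / |sInf (U (x * y)) - (sInf (U x) + sInf (U y))|)
    have hn0 : (0 : ℝ) < n := lt_trans (by positivity) hn
    have := hbound n (by exact_mod_cast hn0)
    rw [div_lt_iff₀ hpos] at hn
    rw [le_div_iff₀ hn0] at this
    linarith
  exact ⟨MonoidHom.mk' (fun x => Multiplicative.ofAdd (sInf (U x)))
    (fun x y => by rw [hadd]; rfl), fun g p q hq hle => hlo g p q hq hle⟩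

/-- A nontrivial homomorphism from a finitely generated group to `ℝ` yields an epimorphism onto
`ℤ`: the image is a free abelian group of finite positive rank. -/
lemma exists_surjective_int_of_real {G : Type*} [Group G] [hfg : Group.FG G]
    (φ : G →* Multiplicative ℝ) (g : G) (hg : φ g ≠ 1) :
    ∃ ψ : G →* Multiplicative ℤ, Function.Surjective ψ := by
  let θ : Additive G →+ ℝ := MonoidHom.toAdditiveLeft φ
  let M : Submodule ℤ ℝ := AddSubgroup.toIntSubmodule θ.range
  have hadd : AddGroup.FG (Additive G) := inferInstance
  have hM : Module.Finite ℤ M := by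
    rw [Module.Finite.iff_fg]
    have : AddGroup.FG θ.range := AddGroup.fg_range θ
    have := (AddGroup.fg_iff_addSubgroup_fg _).1 this
    rw [Submodule.fg_iff_addSubgroup_fg]
    simpa [M] using this
  have : Module.Free ℤ M := inferInstance
  let b := Module.Free.chooseBasis ℤ M
  have hne : Nonempty (Module.Free.ChooseBasisIndex ℤ M) := by
    by_contra hemp
    rw [not_nonempty_iff] at hemp
    have hsub : Subsingleton M := b.repr.toEquiv.subsingleton
    have hmem : θ (Additive.ofMul g) ∈ M := ⟨_, rfl⟩
    have := congrArg Subtype.val (Subsingleton.elim (⟨_, hmem⟩ : M) 0)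
    exact hg this
  obtain ⟨i⟩ := hne
  let ρ : Additive G →+ M := θ.rangeRestrict
  have hρ : Function.Surjective ρ := θ.rangeRestrict_surjective
  let χ : Additive G →+ ℤ := (b.coord i).toAddMonoidHom.comp ρ
  refine ⟨AddMonoidHom.toMultiplicativeRight χ, fun z => ?_⟩
  obtain ⟨x, hx⟩ := hρ (z.toAdd • b i)
  refine ⟨x.toMul, ?_⟩
  change Multiplicative.ofAdd (b.coord i (ρ x)) = z
  rw [hx]
  simp

/-- A left-ordered group generated by a finite set admits an epimorphism onto `ℤ` as soon as a
subgroup `H` of finite index acts on the order by order-preserving right translations: a power `h`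
of the largest generator is cofinal in `H`, Hölder's homomorphism `H → ℝ` is positive on `h`, and its
transfer to `G` does not kill `h`. -/
lemma exists_surjective_int_of_order {G : Type*} [Group G] [LinearOrder G] [MulLeftMono G]
    [Nontrivial G] {X : Type*} [Finite X] (π : FreeMonoid X →* G) (hπ : Function.Surjective π)
    (H : Subgroup G) [H.FiniteIndex] (hH : ∀ a ∈ H, ∀ x y : G, x ≤ y → x * a ≤ y * a) :
    ∃ ψ : G →* Multiplicative ℤ, Function.Surjective ψ := by
  classical
  have hXne : Nonempty X := by
    by_contra hemp
    rw [not_nonempty_iff] at hemp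
    obtain ⟨g, hg⟩ := exists_ne (1 : G)
    obtain ⟨w, rfl⟩ := hπ g
    apply hg
    induction w using FreeMonoid.inductionOn' with
    | one => simp
    | of_mul x _ _ => exact hemp.elim x
  obtain ⟨x₀, hx₀⟩ := Finite.exists_max fun x => π (FreeMonoid.of x)
  set f := π (FreeMonoid.of x₀) with hf
  have hf1 : 1 < f := by
    by_contra hle
    rw [not_lt] at hle
    have hall : ∀ g : G, g ≤ 1 := fun g => by
      obtain ⟨w, rfl⟩ := hπ g
      induction w using FreeMonoid.inductionOn' with
      | one => simp
      | of_mul x w ih =>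
        rw [map_mul]
        calc π (FreeMonoid.of x) * π w ≤ π (FreeMonoid.of x) * 1 := by gcongr
          _ = π (FreeMonoid.of x) := mul_one _
          _ ≤ 1 := (hx₀ x).trans hle
    obtain ⟨g, hg⟩ := exists_ne (1 : G)
    have h1 := hall g
    exact hg (le_antisymm h1 (by
      have h3 : g⁻¹ ≤ 1 := hall _
      have : g * g⁻¹ ≤ g * 1 := by gcongr
      simpa using this))
  obtain ⟨N, hN0, -, hNH⟩ := Subgroup.exists_pow_mem_of_index_ne_zero
    (Subgroup.FiniteIndex.index_ne_zero (H := H)) f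
  set h := f ^ N with hh
  have h1 : 1 < h := one_lt_pow' hf1 hN0.ne'
  have hfh : f ≤ h := by
    have := pow_le_pow_right' hf1.le (show 1 ≤ N from hN0)
    simpa using this
  have hpowH : ∀ n : ℤ, h ^ n ∈ H := fun n => zpow_mem hNH n
  have hmono : ∀ p q : ℤ, h ^ p ≤ h ^ q ↔ p ≤ q := fun p q =>
    zpow_le_zpow_iff_of_one_lt h1
  have hcof : ∀ g : G, ∃ n : ℕ, g ≤ h ^ n := fun g => by
    obtain ⟨w, rfl⟩ := hπ g
    induction w using FreeMonoid.inductionOn' with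
    | one => exact ⟨0, by simp⟩
    | of_mul x w ih =>
      obtain ⟨n, hn⟩ := ih
      refine ⟨n + 1, ?_⟩
      rw [map_mul]
      calc π (FreeMonoid.of x) * π w ≤ π (FreeMonoid.of x) * h ^ n := by gcongr
        _ ≤ h * h ^ n := by
            have := hH _ (hpowH n) _ _ ((hx₀ x).trans hfh)
            simpa using this
        _ = h ^ (n + 1) := (pow_succ' _ _).symm
  have hlow : ∀ g : G, ∃ n : ℕ, h ^ (-(n : ℤ)) ≤ g := fun g => by
    obtain ⟨n, hn⟩ := hcof g⁻¹
    refine ⟨n, ?_⟩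
    have e : 1 ≤ g * h ^ n := by
      calc (1 : G) = g * g⁻¹ := (mul_inv_cancel g).symm
        _ ≤ g * h ^ n := by gcongr
    have := hH _ (hpowH (-(n : ℤ))) _ _ e
    rw [one_mul, mul_assoc, ← zpow_natCast, ← zpow_add] at this
    simpa using this
  have : MulRightMono H := ⟨fun a x y hxy => hH a a.2 x y hxy⟩
  have : MulLeftMono H := ⟨fun a x y hxy => by
    change (a : G) * x ≤ a * y
    have : (x : G) ≤ y := hxy
    gcongr⟩
  let hs : H := ⟨h, hNH⟩
  obtain ⟨τ, hτ⟩ := exists_hoelder_hom hs h1 (fun g => by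
    obtain ⟨n, hn⟩ := hcof g
    exact ⟨n, by exact hn⟩)
  -- Conjugates of positive powers of `h` still have positive image, so nothing cancels in the
  -- transfer of `h`.
  have hpos : ∀ (y : H) (x : G) (k : ℕ), 0 < k → (y : G) = x⁻¹ * h ^ k * x → 0 < (τ y).toAdd := by
    intro y x k hk hy
    obtain ⟨m, hm⟩ := hlow x
    obtain ⟨m', hm'⟩ := hlow x⁻¹
    let n := m + m' + 1
    have e1 : (y : G) ^ n = x⁻¹ * h ^ (k * n) * x := by
      rw [hy, pow_mul]
      have := conj_pow (i := n) (a := x⁻¹) (b := h ^ k)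
      rw [inv_inv] at this
      exact this
    have e2 : h ^ (1 : ℤ) ≤ (y : G) ^ n := by
      rw [e1]
      calc h ^ (1 : ℤ) ≤ h ^ (-(m' : ℤ) + (k * n : ℕ) + -(m : ℤ)) := by
            rw [hmono]
            have : n ≤ k * n := Nat.le_mul_of_pos_left n hk
            simp only [n] at this ⊢
            omega
        _ = h ^ (-(m' : ℤ)) * h ^ (((k * n : ℕ) : ℤ) + -(m : ℤ)) := by rw [← zpow_add, add_assoc]
        _ ≤ x⁻¹ * h ^ (((k * n : ℕ) : ℤ) + -(m : ℤ)) := hH _ (hpowH _) _ _ hm'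
        _ = x⁻¹ * h ^ (k * n) * h ^ (-(m : ℤ)) := by rw [zpow_add, zpow_natCast, mul_assoc]
        _ ≤ x⁻¹ * h ^ (k * n) * x := by gcongr
    have := hτ y 1 n (by simp [n]) (by exact e2)
    refine lt_of_lt_of_le ?_ this
    have : (0 : ℝ) < n := by simp only [n]; positivity
    push_cast
    positivity
  have : Finite (G ⧸ H) := Subgroup.finite_quotient_of_finiteIndex
  have : Fintype (Quotient (MulAction.orbitRel (Subgroup.zpowers h) (G ⧸ H))) :=
    Fintype.ofFinite _
  have htr := MonoidHom.transfer_eq_prod_quotient_orbitRel_zpowers_quot τ h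
  have : Group.FG G := by
    rw [Group.fg_iff_monoid_fg, Monoid.fg_iff]
    refine ⟨Set.range fun x => π (FreeMonoid.of x), ?_, Set.finite_range _⟩
    rw [eq_top_iff]
    rintro g -
    obtain ⟨w, rfl⟩ := hπ g
    induction w using FreeMonoid.inductionOn' with
    | one => simp
    | of_mul x w ih =>
      rw [map_mul]
      exact mul_mem (Submonoid.subset_closure ⟨x, rfl⟩) ih
  refine exists_surjective_int_of_real (MonoidHom.transfer τ) h fun hone => ?_
  rw [hone] at htr
  have hsum := congrArg Multiplicative.toAdd htr
  rw [toAdd_one, toAdd_prod] at hsum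
  have : 0 < ∑ q : Quotient (MulAction.orbitRel (Subgroup.zpowers h) (G ⧸ H)),
      (τ ⟨q.out.out⁻¹ * h ^ Function.minimalPeriod (h • ·) q.out * q.out.out,
        QuotientGroup.out_conj_pow_minimalPeriod_mem H h q.out⟩).toAdd := by
    refine Finset.sum_pos (fun q _ => hpos _ _ _ ?_ rfl) ?_
    · exact Function.minimalPeriod_pos_of_mem_periodicPts
        (Function.Injective.mem_periodicPts (MulAction.injective h) _)
    · exact ⟨Quotient.mk _ ((1 : G) : G ⧸ H), Finset.mem_univ _⟩
  linarith

end Hoelder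

/-! ### Countably many cones force a finite conjugation orbit -/

section Countability

lemma countable_of_freeMonoid_surjective {G : Type*} [Group G] {X : Type*} [Finite X]
    (π : FreeMonoid X →* G) (hπ : Function.Surjective π) : Countable G := by
  have : Countable (FreeMonoid X) := inferInstanceAs (Countable (List X))
  exact hπ.countable

/-- There are countably many finite automata, hence countably many regular subsets. -/
lemma countable_hasRegularConeEval (G : Type*) [Group G] [Countable G] :
    {S : Set G | HasRegularConeEval S}.Countable := by
  let T := Σ n : ℕ, Σ m : ℕ, (Fin n → G) × (Fin m → Fin n → Fin m) × Fin m × Set (Fin m)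
  let F : T → Set G := fun c =>
    evalLang (FreeMonoid.lift c.2.2.1)
      (DFA.mk c.2.2.2.1 c.2.2.2.2.1 c.2.2.2.2.2 : DFA (Fin c.1) (Fin c.2.1)).accepts
  refine (Set.countable_range F).mono ?_
  rintro S ⟨X, hX, π, -, L, ⟨σ, hσ, M, rfl⟩, rfl⟩
  let e := Fintype.equivFin X
  let M' : DFA (Fin (Fintype.card X)) (Fin (Fintype.card σ)) :=
    DFA.reindex (Fintype.equivFin σ) (M.comap e.symm)
  refine ⟨⟨Fintype.card X, Fintype.card σ, fun i => π (FreeMonoid.of (e.symm i)),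
    M'.step, M'.start, M'.accept⟩, ?_⟩
  change evalLang (FreeMonoid.lift fun i => π (FreeMonoid.of (e.symm i))) M'.accepts = _
  have hM' : M'.accepts = List.map e.symm ⁻¹' M.accepts := by
    simp only [M', DFA.accepts_reindex, DFA.accepts_comap]
    rfl
  have hval : ∀ w : List (Fin (Fintype.card X)),
      FreeMonoid.lift (fun i => π (FreeMonoid.of (e.symm i))) (FreeMonoid.ofList w) =
        π (FreeMonoid.ofList (w.map e.symm)) := fun w => by
    induction w with
    | nil => simp
    | cons a w ih =>
      rw [List.map_cons, FreeMonoid.ofList_cons, FreeMonoid.ofList_cons, map_mul, map_mul, ih]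
      simp
  ext g
  simp only [evalLang]
  constructor
  · rintro ⟨w, hw, rfl⟩
    rw [hM'] at hw
    exact ⟨w.map e.symm, hw, (hval w).symm⟩
  · rintro ⟨w, hw, rfl⟩
    have hmm : (w.map e).map e.symm = w := by simp
    refine ⟨w.map e, ?_, ?_⟩
    · rw [hM']
      change (w.map e).map e.symm ∈ M.accepts
      rwa [hmm]
    · change FreeMonoid.lift _ (FreeMonoid.ofList _) = _
      rw [hval, hmm]

lemma AllConesRegular.countable {G : Type*} [Group G] (h : AllConesRegular G) :
    {P : Set G | IsPositiveCone P}.Countable := by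
  obtain ⟨⟨P, hP⟩, hreg⟩ := h
  obtain ⟨X, _, π, hπ, -⟩ := hreg P hP
  have := countable_of_freeMonoid_surjective π hπ
  exact (countable_hasRegularConeEval G).mono fun Q hQ => hreg Q hQ

end Countability

section FiniteOrbit

/-- Conjugation action on subsets of `G`, encoded as functions `G → Bool`. -/
@[reducible] def conjBoolAction (G : Type*) [Group G] : MulAction G (G → Bool) where
  smul g p := fun x => p (g⁻¹ * x * g)
  one_smul p := by funext x; change p _ = p x; congr 1; group
  mul_smul g h p := by funext x; change p _ = p _; congr 1; group

/-- The positive cones form a closed subset of the Cantor cube `G → Bool`. -/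
lemma isClosed_cones (G : Type*) [Group G] :
    IsClosed {p : G → Bool | IsPositiveCone {g | p g = true}} := by
  have hc : ∀ g : G, IsClopen {p : G → Bool | p g = true} := fun g =>
    (isClopen_discrete ({true} : Set Bool)).preimage (continuous_apply g)
  have hc' : ∀ g : G, IsClosed {p : G → Bool | ¬ p g = true} := fun g => (hc g).compl.isClosed
  have : {p : G → Bool | IsPositiveCone {g | p g = true}} =
      (⋂ a : G, ⋂ b : G, ({p | ¬ p a = true} ∪ ({p | ¬ p b = true} ∪ {p | p (a * b) = true}))) ∩
      ((⋂ g : G, ({p | p g = true} ∪ ({p | p g⁻¹ = true} ∪ {_p | g = 1}))) ∩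
      ((⋂ g : G, ({p | ¬ p g = true} ∪ {p | ¬ p g⁻¹ = true})) ∩ {p | ¬ p 1 = true})) := by
    ext p
    simp only [IsPositiveCone, Set.mem_ofPred_eq, Set.mem_inter_iff, Set.mem_iInter,
      Set.mem_union]
    refine and_congr ?_ (and_congr Iff.rfl (and_congr ?_ Iff.rfl))
    · constructor
      · intro h a b
        by_cases ha : p a = true
        · by_cases hb : p b = true
          · exact Or.inr (Or.inr (h a ha b hb))
          · exact Or.inr (Or.inl hb)
        · exact Or.inl ha
      · intro h a ha b hb
        rcases h a b with h | h | h
        · exact absurd ha h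
        · exact absurd hb h
        · exact h
    · exact forall_congr' fun g => imp_iff_not_or
  rw [this]
  refine IsClosed.inter ?_ (IsClosed.inter ?_ (IsClosed.inter ?_ (hc' 1)))
  · exact isClosed_iInter fun a => isClosed_iInter fun b =>
      (hc' a).union ((hc' b).union (hc _).isClosed)
  · exact isClosed_iInter fun g => (hc g).isClosed.union ((hc _).isClosed.union isClosed_const)
  · exact isClosed_iInter fun g => (hc' g).union (hc' _)

/-- A compact countable space of positive cones contains a finite conjugation orbit: in a minimal
nonempty closed invariant subset some point is isolated by Baire's theorem, hence by minimality
the subset is a single discrete orbit. -/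
lemma exists_cone_finiteIndex {G : Type*} [Group G]
    (hcount : {P : Set G | IsPositiveCone P}.Countable) (hne : ∃ P : Set G, IsPositiveCone P) :
    ∃ P : Set G, IsPositiveCone P ∧ ∃ H : Subgroup G, H.FiniteIndex ∧
      ∀ a ∈ H, ∀ x ∈ P, a⁻¹ * x * a ∈ P := by
  classical
  let := conjBoolAction G
  have hsmul : ∀ (g : G) (p : G → Bool) (x : G), (g • p) x = p (g⁻¹ * x * g) := fun _ _ _ => rfl
  have hcont : ∀ g : G, Continuous fun p : G → Bool => g • p := fun g =>
    continuous_pi fun x => continuous_apply (g⁻¹ * x * g)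
  let Λ : Set (G → Bool) := {p | IsPositiveCone {g | p g = true}}
  have hΛcl : IsClosed Λ := isClosed_cones G
  have hΛct : Λ.Countable := by
    refine Set.MapsTo.countable_of_injOn (f := fun p : G → Bool => {g | p g = true})
      (fun p hp => hp) ?_ hcount
    intro p _ q _ hpq
    funext x
    exact Bool.eq_iff_iff.2 (Set.ext_iff.1 hpq x)
  have hΛinv : ∀ (g : G), ∀ p ∈ Λ, g • p ∈ Λ := by
    rintro g p ⟨hm, ht, ha, ho⟩
    simp only [Set.mem_ofPred_eq] at hm ht ha ho
    refine ⟨?_, ?_, ?_, ?_⟩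
    · intro a ha' b hb'
      have := hm _ ha' _ hb'
      change p _ = true
      convert this using 2
      group
    · intro x
      rcases ht (g⁻¹ * x * g) with h | h | h
      · exact Or.inl h
      · refine Or.inr (Or.inl ?_)
        change p _ = true
        convert h using 2
        group
      · refine Or.inr (Or.inr ?_)
        have : x = g * (g⁻¹ * x * g) * g⁻¹ := by group
        rw [this, h]; group
    · intro x hx hx'
      apply ha _ hx
      have : p (g⁻¹ * x⁻¹ * g) = true := hx'
      convert this using 2
      group
    · intro h
      apply ho
      have : p (g⁻¹ * 1 * g) = true := h
      convert this using 2
      group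
  let S : Set (Set (G → Bool)) :=
    {M | IsClosed M ∧ M.Nonempty ∧ M ⊆ Λ ∧ ∀ (g : G), ∀ p ∈ M, g • p ∈ M}
  have hΛS : Λ ∈ S := by
    refine ⟨hΛcl, ?_, subset_rfl, hΛinv⟩
    obtain ⟨P, hP⟩ := hne
    exact ⟨fun x => decide (x ∈ P), by simpa [Λ] using hP⟩
  obtain ⟨M, -, hM⟩ := zorn_superset_nonempty S (fun c hcS hchain hcne => by
    refine ⟨⋂₀ c, ⟨isClosed_sInter fun s hs => (hcS hs).1, ?_, ?_, ?_⟩, fun s hs =>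
      Set.sInter_subset_of_mem hs⟩
    · have : Nonempty c := hcne.to_subtype
      exact IsCompact.nonempty_sInter_of_directed_nonempty_isCompact_isClosed
        (show IsChain (· ⊇ ·) c from hchain.symm).directedOn (fun s hs => (hcS hs).2.1)
        (fun s hs => (hcS hs).1.isCompact) (fun s hs => (hcS hs).1)
    · obtain ⟨s, hs⟩ := hcne
      exact (Set.sInter_subset_of_mem hs).trans (hcS hs).2.2.1
    · intro g p hp s hs
      exact (hcS hs).2.2.2 g p (hp s hs)) Λ hΛS
  obtain ⟨hMcl, hMne, hMΛ, hMinv⟩ := hM.prop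
  have : Nonempty M := hMne.to_subtype
  have : Countable M := (hΛct.mono hMΛ).to_subtype
  have : CompactSpace M := isCompact_iff_compactSpace.1 hMcl.isCompact
  obtain ⟨x, hx⟩ := nonempty_interior_of_iUnion_of_closed (X := M) (f := fun x : M => {x})
    (fun x => isClosed_singleton) (Set.iUnion_of_singleton M)
  have hopen : IsOpen ({x} : Set M) := by
    obtain ⟨y, hy⟩ := hx
    have hyx : y = x := interior_subset (s := ({x} : Set M)) hy
    have : interior ({x} : Set M) = {x} :=
      Set.Subset.antisymm interior_subset (by rintro z rfl; exact hyx ▸ hy)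
    rw [← this]; exact isOpen_interior
  obtain ⟨U, hUo, hU⟩ := isOpen_induced_iff.1 hopen
  have hUx : (x : G → Bool) ∈ U := by
    have : x ∈ (Subtype.val ⁻¹' U : Set M) := by rw [hU]; rfl
    exact this
  have hUM : ∀ p ∈ U, p ∈ M → p = x := fun p hpU hpM => by
    have : (⟨p, hpM⟩ : M) ∈ (Subtype.val ⁻¹' U : Set M) := hpU
    rw [hU] at this
    exact congrArg Subtype.val this
  let V : G → Set (G → Bool) := fun g => (fun p => g⁻¹ • p) ⁻¹' U
  have hVo : ∀ g, IsOpen (V g) := fun g => hUo.preimage (hcont g⁻¹)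
  have hcover : M ⊆ ⋃ g, V g := by
    by_contra hnc
    rw [Set.not_subset] at hnc
    obtain ⟨y, hyM, hyV⟩ := hnc
    have hN : M \ ⋃ g, V g ∈ S := by
      refine ⟨hMcl.sdiff (isOpen_iUnion hVo), ⟨y, hyM, hyV⟩, Set.sdiff_subset.trans hMΛ, ?_⟩
      rintro g p ⟨hp, hpV⟩
      refine ⟨hMinv g p hp, fun hgp => hpV ?_⟩
      obtain ⟨h, hh⟩ := Set.mem_iUnion.1 hgp
      refine Set.mem_iUnion.2 ⟨g⁻¹ * h, ?_⟩
      change (g⁻¹ * h)⁻¹ • p ∈ U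
      have : h⁻¹ • g • p ∈ U := hh
      rwa [smul_smul, show h⁻¹ * g = (g⁻¹ * h)⁻¹ by group] at this
    have hle := hM.le_of_le hN Set.sdiff_subset
    have := (hle x.2).2
    apply this
    refine Set.mem_iUnion.2 ⟨1, ?_⟩
    change (1 : G)⁻¹ • (x : G → Bool) ∈ U
    rwa [inv_one, one_smul]
  obtain ⟨t, ht⟩ := hMcl.isCompact.elim_finite_subcover V hVo hcover
  have hMfin : M.Finite := by
    refine (t.finite_toSet.image fun g => g • (x : G → Bool)).subset fun p hp => ?_
    obtain ⟨g, hg, hpg⟩ := Set.mem_iUnion₂.1 (ht hp)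
    refine ⟨g, hg, ?_⟩
    rw [← hUM _ hpg (hMinv _ _ hp)]
    exact smul_inv_smul g p
  have horb : (MulAction.orbit G (x : G → Bool)).Finite := by
    refine hMfin.subset ?_
    rintro _ ⟨g, rfl⟩
    exact hMinv g _ x.2
  refine ⟨{g | (x : G → Bool) g = true}, hMΛ x.2, MulAction.stabilizer G (x : G → Bool), ⟨?_⟩, ?_⟩
  · rw [MulAction.index_stabilizer]
    exact ((Set.ncard_pos horb).2 (MulAction.nonempty_orbit _)).ne'
  · intro a ha y hy
    have := congrFun (MulAction.mem_stabilizer_iff.1 ha) y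
    rw [hsmul] at this
    exact this.trans hy

/-- The left-invariant linear order `x ≤ y ↔ x = y ∨ x⁻¹ y ∈ P` of a positive cone. -/
@[reducible] noncomputable def IsPositiveCone.linearOrder {G : Type*} [Group G] {P : Set G}
    (hP : IsPositiveCone P) : LinearOrder G where
  le x y := x = y ∨ x⁻¹ * y ∈ P
  le_refl x := Or.inl rfl
  le_trans x y z := by
    rintro (rfl | h) (rfl | h')
    · exact Or.inl rfl
    · exact Or.inr h'
    · exact Or.inr h
    · refine Or.inr ?_
      have := hP.1 _ h _ h'
      rwa [show x⁻¹ * y * (y⁻¹ * z) = x⁻¹ * z by group] at this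
  le_antisymm x y := by
    rintro (rfl | h) (h' | h')
    · rfl
    · rfl
    · exact h'.symm
    · exact absurd (by rwa [show (x⁻¹ * y)⁻¹ = y⁻¹ * x by group]) (hP.2.2.1 _ h)
  le_total x y := by
    rcases hP.2.1 (x⁻¹ * y) with h | h | h
    · exact Or.inl (Or.inr h)
    · rw [show (x⁻¹ * y)⁻¹ = y⁻¹ * x by group] at h
      exact Or.inr (Or.inr h)
    · exact Or.inl (Or.inl (inv_mul_eq_one.1 h))
  toDecidableLE := Classical.decRel _

/-- A nontrivial group all of whose positive cones are regular maps onto `ℤ`. -/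
lemma AllConesRegular.exists_surjective_int {G : Type*} [Group G] [Nontrivial G]
    (hG : AllConesRegular G) : ∃ ψ : G →* Multiplicative ℤ, Function.Surjective ψ := by
  obtain ⟨P, hP, H, hHfi, hH⟩ := exists_cone_finiteIndex hG.countable hG.1
  obtain ⟨X, _, π, hπ, -⟩ := hG.2 P hP
  let := hP.linearOrder
  have : MulLeftMono G := ⟨fun a x y hxy => by
    rcases hxy with rfl | h
    · exact Or.inl rfl
    · refine Or.inr ?_
      rwa [show (a * x)⁻¹ * (a * y) = x⁻¹ * y by group]⟩
  refine exists_surjective_int_of_order π hπ H fun a ha x y hxy => ?_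
  rcases hxy with rfl | h
  · exact Or.inl rfl
  · refine Or.inr ?_
    have := hH a ha _ h
    rwa [show (x * a)⁻¹ * (y * a) = a⁻¹ * (x⁻¹ * y) * a by group]

end FiniteOrbit

/-! ### Regularity of cones passes to the kernel of a map onto `ℤ` -/

section Kernel

variable {G : Type*} [Group G]

lemma IsPositiveCone.image_val {K : Subgroup G} {Q : Set K} (hQ : IsPositiveCone Q) :
    IsPositiveConeIn K (Subtype.val '' Q) := by
  obtain ⟨hm, ht, ha, ho⟩ := hQ
  refine ⟨?_, ?_, ?_, ?_, ?_⟩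
  · rintro _ ⟨c, -, rfl⟩; exact c.2
  · rintro _ ⟨a, ha', rfl⟩ _ ⟨b, hb', rfl⟩
    exact ⟨a * b, hm a ha' b hb', rfl⟩
  · intro h hh
    rcases ht ⟨h, hh⟩ with h' | h' | h'
    · exact Or.inl ⟨_, h', rfl⟩
    · exact Or.inr (Or.inl ⟨_, h', rfl⟩)
    · exact Or.inr (Or.inr (congrArg Subtype.val h'))
  · rintro _ ⟨c, hc, rfl⟩ ⟨d, hd, hdc⟩
    have : d = c⁻¹ := Subtype.ext hdc
    exact ha c hc (this ▸ hd)
  · rintro ⟨c, hc, hc1⟩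
    have : c = 1 := Subtype.ext hc1
    exact ho (this ▸ hc)

lemma IsPositiveCone.preimage {H : Type*} [Group H] {P : Set G} (hP : IsPositiveCone P)
    (e : H →* G) (he : Function.Injective e) : IsPositiveCone {h : H | e h ∈ P} := by
  obtain ⟨hm, ht, ha, ho⟩ := hP
  refine ⟨?_, ?_, ?_, ?_⟩
  · intro a ha' b hb'
    change e (a * b) ∈ P
    rw [map_mul]; exact hm _ ha' _ hb'
  · intro h
    rcases ht (e h) with h' | h' | h'
    · exact Or.inl h'
    · refine Or.inr (Or.inl ?_)
      change e h⁻¹ ∈ P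
      rwa [map_inv]
    · exact Or.inr (Or.inr (he (by rw [h', map_one])))
  · intro g hg hg'
    have : e g⁻¹ ∈ P := hg'
    rw [map_inv] at this
    exact ha _ hg this
  · intro h
    have : e 1 ∈ P := h
    rw [map_one] at this
    exact ho this

lemma AllConesRegular.congr {H : Type*} [Group H] (e : G ≃* H) (hG : AllConesRegular G) :
    AllConesRegular H := by
  obtain ⟨⟨P, hP⟩, hreg⟩ := hG
  refine ⟨⟨_, hP.preimage e.symm.toMonoidHom e.symm.injective⟩, fun Q hQ => ?_⟩
  obtain ⟨X, hX, π, hπ, L, hL, hLQ⟩ := hreg _ (hQ.preimage e.toMonoidHom e.injective)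
  refine ⟨X, hX, e.toMonoidHom.comp π, e.surjective.comp hπ, L, hL, ?_⟩
  ext h
  constructor
  · rintro ⟨w, hw, rfl⟩
    have : π (FreeMonoid.ofList w) ∈ evalLang π L := ⟨w, hw, rfl⟩
    rw [hLQ] at this
    exact this
  · intro hh
    have : e.symm h ∈ evalLang π L := by
      rw [hLQ]
      change e (e.symm h) ∈ Q
      rwa [e.apply_symm_apply]
    obtain ⟨w, hw, hwe⟩ := this
    refine ⟨w, hw, ?_⟩
    change e (π (FreeMonoid.ofList w)) = h
    have h2 : π (FreeMonoid.ofList w) = e.symm h := hwe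
    rw [h2, e.apply_symm_apply]

/-- If `f` is nonnegative on all accepted words, then the prefixes of an accepted word of value `0`
have bounded value, because every prefix and every suffix can be completed to an accepted word by one of finitely many
words. -/
lemma exists_prefix_bound {X σ : Type*} [Fintype σ] (M : DFA X σ) (f : List X → ℤ)
    (hf : ∀ u v, f (u ++ v) = f u + f v) (hpos : ∀ w ∈ M.accepts, 0 ≤ f w) :
    ∃ K : ℕ, ∀ u v, u ++ v ∈ M.accepts → f (u ++ v) = 0 → -(K : ℤ) ≤ f u ∧ f u ≤ K := by
  have hacc : ∀ u v, u ++ v ∈ M.accepts ↔ M.evalFrom (M.evalFrom M.start u) v ∈ M.accept :=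
    fun u v => by rw [DFA.mem_accepts, DFA.eval, DFA.evalFrom_of_append]
  have h1 : ∀ q : σ, ∃ k : ℕ, ∀ u v, M.evalFrom M.start u = q → M.evalFrom q v ∈ M.accept →
      -(k : ℤ) ≤ f u := fun q => by
    by_cases h : ∃ v, M.evalFrom q v ∈ M.accept
    · obtain ⟨v, hv⟩ := h
      refine ⟨(f v).toNat, fun u _ hu _ => ?_⟩
      have := hpos (u ++ v) ((hacc u v).2 (by rwa [hu]))
      rw [hf] at this
      omega
    · exact ⟨0, fun u v _ hv => absurd ⟨v, hv⟩ h⟩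
  have h2 : ∀ q : σ, ∃ k : ℕ, ∀ u v, M.evalFrom M.start u = q → M.evalFrom q v ∈ M.accept →
      -(k : ℤ) ≤ f v := fun q => by
    by_cases h : ∃ u, M.evalFrom M.start u = q
    · obtain ⟨u, hu⟩ := h
      refine ⟨(f u).toNat, fun _ v _ hv => ?_⟩
      have := hpos (u ++ v) ((hacc u v).2 (by rwa [hu]))
      rw [hf] at this
      omega
    · exact ⟨0, fun u v hu _ => absurd ⟨u, hu⟩ h⟩
  choose k₁ hk₁ using h1
  choose k₂ hk₂ using h2
  refine ⟨∑ q, (k₁ q + k₂ q), fun u v huv h0 => ?_⟩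
  have hle : k₁ (M.evalFrom M.start u) + k₂ (M.evalFrom M.start u) ≤ ∑ q, (k₁ q + k₂ q) :=
    Finset.single_le_sum (f := fun q => k₁ q + k₂ q) (fun _ _ => Nat.zero_le _)
      (Finset.mem_univ (M.evalFrom M.start u))
  have a1 := hk₁ _ u v rfl ((hacc u v).1 huv)
  have a2 := hk₂ _ u v rfl ((hacc u v).1 huv)
  rw [hf] at h0
  omega

/-- The automaton that reads pairs `(i, x)`, runs `M` on the letters `x` and checks that the
integers `i` are the successive partial sums of the weights `f x`, all of them in `[-K, K]`.
A letter with second component `false` is refused. -/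
noncomputable def trackDFA {X σ : Type} (M : DFA X σ) (f : X → ℤ) (K : ℕ) :
    DFA ((Set.Icc (-(K : ℤ)) K × X) × Bool) (Option (σ × Set.Icc (-(K : ℤ)) K)) where
  step s y := s.bind fun r =>
    if h : y.1.1 = r.2 ∧ (r.2 : ℤ) + f y.1.2 ∈ Set.Icc (-(K : ℤ)) K ∧ y.2 = true then
      some (M.step r.1 y.1.2, ⟨_, h.2.1⟩) else none
  start := some (M.start, ⟨0, by simp⟩)
  accept := {s | ∃ q ∈ M.accept, s = some (q, ⟨0, by simp⟩)}

lemma trackDFA_evalFrom_none {X σ : Type} (M : DFA X σ) (f : X → ℤ) (K : ℕ) (w) :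
    (trackDFA M f K).evalFrom none w = none := by
  induction w with
  | nil => rfl
  | cons y w ih => rw [DFA.evalFrom_cons]; exact ih

/-- Regularity of all positive cones passes to the kernel of an epimorphism `φ` onto `ℤ`: a cone `Q`
of the kernel is the trace of the lexicographic cone of `φ` and `Q` on `G`, whose automaton visits
only finitely many cosets while reading words of kernel value. Rewriting each letter relative to the
coset representatives `t ^ i` (Reidemeister–Schreier) turns it into an automaton for `Q`, which
also shows that the kernel is finitely generated. -/
lemma AllConesRegular.ker (hG : AllConesRegular G) (φ : G →* Multiplicative ℤ)
    (hφ : Function.Surjective φ) : AllConesRegular φ.ker := by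
  obtain ⟨⟨P, hP⟩, hreg⟩ := hG
  refine ⟨⟨_, hP.preimage φ.ker.subtype φ.ker.subtype_injective⟩, fun Q hQ => ?_⟩
  let f : G → ℤ := fun g => (φ g).toAdd
  have hfm : ∀ x y, f (x * y) = f x + f y := fun x y => by simp [f]
  have hfi : ∀ x, f x⁻¹ = - f x := fun x => by simp [f]
  have hfz : ∀ x (n : ℤ), f (x ^ n) = n * f x := fun x n => by simp [f]
  have hfk : ∀ x, f x = 0 ↔ x ∈ φ.ker := fun x => by simp [f, MonoidHom.mem_ker]
  have hcone := isPositiveCone_lex φ.ker (fun g => (f g : ℝ))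
    (fun x y => by rw [hfm]; push_cast; rfl) (fun x => by rw [← hfk]; exact Int.cast_eq_zero)
    _ hQ.image_val
  obtain ⟨X, hX, π, hπ, L, ⟨σ, hσ, M, rfl⟩, hL⟩ := hreg _ hcone
  have hLmem : ∀ w ∈ M.accepts, 0 < f (π (FreeMonoid.ofList w)) ∨
      π (FreeMonoid.ofList w) ∈ Subtype.val '' Q := fun w hw => by
    have : π (FreeMonoid.ofList w) ∈ evalLang π M.accepts := ⟨w, hw, rfl⟩
    rw [hL] at this
    rcases this with h | h
    · exact Or.inl (by exact_mod_cast h)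
    · exact Or.inr h
  let F : List X → ℤ := fun w => f (π (FreeMonoid.ofList w))
  have hF : ∀ u v, F (u ++ v) = F u + F v := fun u v => by
    simp only [F, FreeMonoid.ofList_append, map_mul, hfm]
  obtain ⟨K, hK⟩ := exists_prefix_bound M F hF (fun w hw => by
    rcases hLmem w hw with h | ⟨c, -, hc⟩
    · exact h.le
    · exact ((hfk _).2 (hc ▸ c.2)).ge)
  obtain ⟨t, ht⟩ := hφ (Multiplicative.ofAdd 1)
  have hft : f t = 1 := by simp [f, ht]
  let a : X → G := fun x => π (FreeMonoid.of x)
  let ω : X → ℤ := fun x => f (a x)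
  -- Schreier generators, with their inverses added so that they generate as a monoid
  let val : (Set.Icc (-(K : ℤ)) K × X) × Bool → φ.ker := fun y =>
    let c : φ.ker := ⟨t ^ (y.1.1 : ℤ) * a y.1.2 * t ^ (-(y.1.1 + ω y.1.2 : ℤ)), by
      rw [← hfk, hfm, hfm, hfz, hfz, hft]; simp only [ω]; ring⟩
    if y.2 then c else c⁻¹
  let N := trackDFA M ω K
  let π' := FreeMonoid.lift val
  have hsound : ∀ w q j q' j', N.evalFrom (some (q, j)) w = some (q', j') →
      ∃ w' : List X, M.evalFrom q w' = q' ∧ ((π' (FreeMonoid.ofList w) : φ.ker) : G) =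
        t ^ (j : ℤ) * π (FreeMonoid.ofList w') * t ^ (-(j' : ℤ)) := by
    intro w
    induction w with
    | nil =>
      intro q j q' j' h
      rw [DFA.evalFrom_nil] at h
      simp only [Option.some.injEq, Prod.mk.injEq] at h
      obtain ⟨rfl, rfl⟩ := h
      exact ⟨[], rfl, by simp⟩
    | cons y w ih =>
      intro q j q' j' h
      rw [DFA.evalFrom_cons] at h
      obtain ⟨⟨i, x⟩, b⟩ := y
      by_cases hc : i = j ∧ (j : ℤ) + ω x ∈ Set.Icc (-(K : ℤ)) K ∧ b = true
      · have hstep : N.step (some (q, j)) ((i, x), b) =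
            some (M.step q x, ⟨(j : ℤ) + ω x, hc.2.1⟩) := by
          simp only [N, trackDFA, Option.bind_some]
          rw [dif_pos hc]
        rw [hstep] at h
        obtain ⟨w', hw', hval⟩ := ih _ _ _ _ h
        refine ⟨x :: w', by rw [DFA.evalFrom_cons]; exact hw', ?_⟩
        have hij := hc.1
        have hb := hc.2.2
        subst hij hb
        rw [FreeMonoid.ofList_cons, map_mul, Subgroup.coe_mul, hval, FreeMonoid.ofList_cons,
          map_mul]
        simp only [π', FreeMonoid.lift_eval_of, val, if_true, a]
        group
      · have hstep : N.step (some (q, j)) ((i, x), b) = none := by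
          simp only [N, trackDFA, Option.bind_some]
          rw [dif_neg hc]
        rw [hstep, trackDFA_evalFrom_none] at h
        exact absurd h (by simp)
  have hcomplete : ∀ (w' : List X) (q) (j : Set.Icc (-(K : ℤ)) K),
      (∀ u v, u ++ v = w' → (j : ℤ) + F u ∈ Set.Icc (-(K : ℤ)) K) →
      ∃ w j', N.evalFrom (some (q, j)) w = some (M.evalFrom q w', j') ∧ (j' : ℤ) = j + F w' ∧
        ((π' (FreeMonoid.ofList w) : φ.ker) : G) =
          t ^ (j : ℤ) * π (FreeMonoid.ofList w') * t ^ (-(j' : ℤ)) := by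
    intro w'
    induction w' with
    | nil => exact fun q j _ => ⟨[], j, rfl, by simp [F, f], by simp⟩
    | cons x w' ih =>
      intro q j hb
      have hx : F [x] = ω x := by simp [F, ω, a]
      have hmem : (j : ℤ) + ω x ∈ Set.Icc (-(K : ℤ)) K := by
        rw [← hx]; exact hb [x] w' rfl
      obtain ⟨w, j', he, hj', hv⟩ := ih (M.step q x) ⟨(j : ℤ) + ω x, hmem⟩ (fun u v huv => by
        have := hb (x :: u) v (by rw [List.cons_append, huv])
        rw [← List.singleton_append, hF, hx, ← add_assoc] at this
        exact this)
      refine ⟨((j, x), true) :: w, j', ?_, ?_, ?_⟩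
      · rw [DFA.evalFrom_cons, DFA.evalFrom_cons, ← he]
        congr 1
        exact dif_pos (c := j = j ∧ (j : ℤ) + ω x ∈ Set.Icc (-(K : ℤ)) K ∧ true = true)
          ⟨rfl, hmem, rfl⟩
      · rw [hj', ← List.singleton_append, hF, hx, add_assoc]
      · rw [FreeMonoid.ofList_cons, map_mul, Subgroup.coe_mul, hv, FreeMonoid.ofList_cons,
          map_mul]
        simp only [π', FreeMonoid.lift_eval_of, val, if_true, a]
        group
  have heval : evalLang π' N.accepts = Q := by
    ext c
    constructor
    · rintro ⟨w, hw, rfl⟩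
      obtain ⟨q, hq, hwq⟩ := hw
      obtain ⟨w', hw', hval⟩ := hsound w _ _ _ _ hwq
      simp only [zpow_zero, one_mul, neg_zero, mul_one] at hval
      rcases hLmem w' (by
        rw [DFA.mem_accepts, DFA.eval, hw']; exact hq) with h | ⟨d, hd, hde⟩
      · rw [← hval, (hfk _).2 (Subtype.property _)] at h
        exact absurd h (lt_irrefl _)
      · rw [← hval] at hde
        have e : d = π' (FreeMonoid.ofList w) := Subtype.ext hde
        change π' (FreeMonoid.ofList w) ∈ Q
        rwa [← e]
    · intro hc
      have : (c : G) ∈ evalLang π M.accepts := by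
        rw [hL]; exact Or.inr ⟨c, hc, rfl⟩
      obtain ⟨w', hw', hwc⟩ := this
      have hwc' : π (FreeMonoid.ofList w') = c := hwc
      have hF0 : F w' = 0 := by
        simp only [F]; rw [hwc']; exact (hfk _).2 c.2
      obtain ⟨w, j', he, hj', hv⟩ := hcomplete w' M.start ⟨0, by simp⟩ (fun u v huv => by
        have := hK u v (by rwa [huv]) (by rw [huv, hF0])
        simpa using this)
      have hj0 : j' = ⟨0, by simp⟩ := Subtype.ext (by rw [hj', hF0]; rfl)
      subst hj0
      refine ⟨w, ⟨M.evalFrom M.start w', hw', he⟩, Subtype.ext ?_⟩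
      refine Eq.trans hv ?_
      simp [hwc']
  have hinvmem : ∀ w, ∃ w', π' w' = (π' w)⁻¹ := fun w => by
    induction w using FreeMonoid.inductionOn' with
    | one => exact ⟨1, by simp⟩
    | of_mul y w ih =>
      obtain ⟨w', hw'⟩ := ih
      refine ⟨w' * FreeMonoid.of (y.1, !y.2), ?_⟩
      rw [map_mul, map_mul, hw', mul_inv_rev]
      congr 1
      obtain ⟨y, b⟩ := y
      cases b <;> simp [π', val]
  have hQmem : ∀ c ∈ Q, ∃ w, π' w = c := fun c hc => by
    rw [← heval] at hc
    obtain ⟨w, -, hw⟩ := hc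
    exact ⟨_, hw⟩
  refine ⟨_, inferInstance, π', fun c => ?_, N.accepts, ⟨_, inferInstance, N, rfl⟩, heval⟩
  rcases hQ.2.1 c with h | h | h
  · exact hQmem c h
  · obtain ⟨w, hw⟩ := hQmem _ h
    obtain ⟨w', hw'⟩ := hinvmem w
    exact ⟨w', by rw [hw', hw, inv_inv]⟩
  · exact ⟨1, by rw [map_one, h]⟩

end Kernel

/-! ### The Klein bottle group and two-step quotients -/

section Klein

/-- The generator `a` of the Klein bottle group. -/
def kleinA : KleinBottleGroup := PresentedGroup.of (rels := kleinRels) true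

/-- The generator `b` of the Klein bottle group. -/
def kleinB : KleinBottleGroup := PresentedGroup.of (rels := kleinRels) false

lemma klein_rel : kleinA * kleinB * kleinA⁻¹ * kleinB = 1 :=
  PresentedGroup.one_of_mem (rels := kleinRels)
    (x := FreeGroup.of true * FreeGroup.of false * (FreeGroup.of true)⁻¹ * FreeGroup.of false) rfl

lemma klein_conj_b : kleinA * kleinB * kleinA⁻¹ = kleinB⁻¹ :=
  eq_inv_of_mul_eq_one_left klein_rel

lemma klein_conj (i k : ℤ) :
    kleinA ^ i * kleinB ^ k * kleinA ^ (-i) = kleinB ^ ((i.negOnePow : ℤ) * k) := by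
  have h1 : ∀ k : ℤ, kleinA * kleinB ^ k * kleinA⁻¹ = kleinB ^ (-k) := fun k => by
    rw [← conj_zpow, klein_conj_b, inv_zpow, zpow_neg]
  have h2 : ∀ k : ℤ, kleinA⁻¹ * kleinB ^ k * kleinA = kleinB ^ (-k) := fun k => by
    have := h1 (-k)
    rw [neg_neg] at this
    rw [← this]; group
  induction i generalizing k with
  | zero => simp
  | succ i ih =>
    have : kleinA ^ ((i : ℤ) + 1) * kleinB ^ k * kleinA ^ (-((i : ℤ) + 1)) =
        kleinA ^ (i : ℤ) * (kleinA * kleinB ^ k * kleinA⁻¹) * kleinA ^ (-(i : ℤ)) := by group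
    rw [this, h1, ih, Int.negOnePow_succ]
    push_cast
    congr 1
    ring
  | pred i ih =>
    have : kleinA ^ (-(i : ℤ) - 1) * kleinB ^ k * kleinA ^ (-(-(i : ℤ) - 1)) =
        kleinA ^ (-(i : ℤ)) * (kleinA⁻¹ * kleinB ^ k * kleinA) * kleinA ^ (-(-(i : ℤ))) := by group
    rw [this, h2, ih, Int.negOnePow_sub]
    simp

lemma klein_mul (p i q j : ℤ) :
    (kleinB ^ p * kleinA ^ i) * (kleinB ^ q * kleinA ^ j) =
      kleinB ^ (p + (i.negOnePow : ℤ) * q) * kleinA ^ (i + j) := by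
  rw [zpow_add, zpow_add, ← klein_conj]
  group

/-- Every element of the Klein bottle group has the form `b ^ j * a ^ i`. -/
lemma klein_normal_form (x : KleinBottleGroup) : ∃ j i : ℤ, x = kleinB ^ j * kleinA ^ i := by
  have key : ∀ w : FreeGroup Bool, ∃ j i : ℤ,
      (PresentedGroup.mk kleinRels w : KleinBottleGroup) = kleinB ^ j * kleinA ^ i := by
    intro w
    induction w using FreeGroup.induction_on with
    | C1 => exact ⟨0, 0, by simp; rfl⟩
    | of x =>
      cases x
      · exact ⟨1, 0, by simp; rfl⟩
      · exact ⟨0, 1, by simp; rfl⟩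
    | inv_of x _ =>
      cases x
      · exact ⟨-1, 0, by simp; rfl⟩
      · exact ⟨0, -1, by simp; rfl⟩
    | mul x y hx hy =>
      obtain ⟨j, i, hx⟩ := hx
      obtain ⟨j', i', hy⟩ := hy
      refine ⟨_, _, Eq.trans ?_ (klein_mul j i j' i')⟩
      rw [← hx, ← hy]
      rfl
  obtain ⟨w, rfl⟩ := PresentedGroup.mk_surjective kleinRels x
  exact key w

/-- The normal form `b ^ j * a ^ i` is unique: the exponent `i` is read off in `ℤ`, and `j` in the
infinite dihedral group. -/
lemma klein_eq_one {j i : ℤ} (h : kleinB ^ j * kleinA ^ i = 1) : j = 0 ∧ i = 0 := by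
  let F : Bool → Multiplicative ℤ := fun x => if x then Multiplicative.ofAdd 1 else 1
  have hF : ∀ r ∈ kleinRels, FreeGroup.lift F r = 1 := by
    rintro r rfl
    simp [F]
  let D : Bool → DihedralGroup 0 := fun x => if x then .sr 0 else .r 1
  have hD : ∀ r ∈ kleinRels, FreeGroup.lift D r = 1 := by
    rintro r rfl
    simp [D]
  let Φ : KleinBottleGroup →* Multiplicative ℤ := PresentedGroup.toGroup hF
  let Δ : KleinBottleGroup →* DihedralGroup 0 := PresentedGroup.toGroup hD
  have hi : i = 0 := by
    have h1 := congrArg Φ h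
    have ha : Φ kleinA = Multiplicative.ofAdd 1 := PresentedGroup.toGroup.of hF
    have hb : Φ kleinB = 1 := PresentedGroup.toGroup.of hF
    rw [map_mul, map_zpow, map_zpow, ha, hb, Φ.map_one, one_zpow, one_mul] at h1
    have := congrArg Multiplicative.toAdd h1
    simpa using this
  refine ⟨?_, hi⟩
  subst hi
  rw [zpow_zero, mul_one] at h
  have h1 := congrArg Δ h
  have hb : Δ kleinB = .r 1 := PresentedGroup.toGroup.of hD
  rw [map_zpow, hb, map_one, DihedralGroup.r_one_zpow, DihedralGroup.one_def] at h1
  have h2 : ((j : ℤ) : ZMod 0) = 0 := DihedralGroup.r.inj h1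
  exact h2

end Klein

section KleinStep

variable {G : Type*} [Group G]

lemma IsZStep.map_one {A B : Subgroup G} {f : G → ℤ} (h : IsZStep A B f) : f 1 = 0 :=
  (h.zero_iff 1 (one_mem _)).2 (one_mem _)

lemma IsZStep.map_inv {A B : Subgroup G} {f : G → ℤ} (h : IsZStep A B f) {x : G} (hx : x ∈ A) :
    f x⁻¹ = - f x := by
  have := h.mul x hx x⁻¹ (inv_mem hx)
  rw [mul_inv_cancel, h.map_one] at this
  omega

/-- The restriction of `f` to `A`, as a homomorphism. -/
def IsZStep.hom {A B : Subgroup G} {f : G → ℤ} (h : IsZStep A B f) : A →* Multiplicative ℤ :=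
  MonoidHom.mk' (fun x => Multiplicative.ofAdd (f x)) (fun x y => by
    rw [Subgroup.coe_mul, h.mul _ x.2 _ y.2]; rfl)

lemma IsZStep.map_zpow {A B : Subgroup G} {f : G → ℤ} (h : IsZStep A B f) {x : G} (hx : x ∈ A)
    (n : ℤ) : f (x ^ n) = n * f x := by
  have h2 : h.hom ((⟨x, hx⟩ : A) ^ n) = h.hom ⟨x, hx⟩ ^ n := _root_.map_zpow h.hom _ n
  have h3 := congrArg Multiplicative.toAdd h2
  rw [toAdd_zpow] at h3
  change f (x ^ n) = n • f x at h3
  simpa using h3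

/-- If `A / B` and `B / D` are infinite cyclic and `A`, `B` have countably many positive cones,
then conjugation by a generator of `A / B` acts on `B / D` by inversion, so that `A / D` is the
Klein bottle group: the other possible action would make `A / D` free abelian of rank two. -/
lemma exists_klein_hom {A B D : Subgroup G} {f g : G → ℤ} (hf : IsZStep A B f)
    (hg : IsZStep B D g) (hA : {P : Set A | IsPositiveCone P}.Countable)
    (hA' : ∃ P : Set A, IsPositiveCone P) (hB : {P : Set B | IsPositiveCone P}.Countable)
    (hB' : ∃ P : Set B, IsPositiveCone P) :
    D ≤ A ∧ ∃ ψ : A →* KleinBottleGroup, Function.Surjective ψ ∧ ψ.ker = D.subgroupOf A := by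
  refine ⟨hg.le.trans hf.le, ?_⟩
  obtain ⟨t, htA, ht⟩ := hf.surj
  obtain ⟨c₁, hc₁B, hc₁⟩ := hg.surj
  have hconj : ∀ x ∈ A, ∀ c ∈ B, x * c * x⁻¹ ∈ B := fun x hx c hc => by
    rw [← hf.zero_iff _ (mul_mem (mul_mem hx (hf.le hc)) (inv_mem hx)),
      hf.mul _ (mul_mem hx (hf.le hc)) _ (inv_mem hx), hf.mul _ hx _ (hf.le hc), hf.map_inv hx,
      (hf.zero_iff c (hf.le hc)).2 hc]
    ring
  have hconjmul : ∀ x ∈ A, ∀ c ∈ B, ∀ d ∈ B, g (x * (c * d) * x⁻¹) =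
      g (x * c * x⁻¹) + g (x * d * x⁻¹) := fun x hx c hc d hd => by
    rw [← hg.mul _ (hconj x hx c hc) _ (hconj x hx d hd)]
    congr 1; group
  -- conjugation by `t` multiplies `g` by a constant, because `B` has countably many cones
  have hprop : ∀ c ∈ B, g (t * c * t⁻¹) = g (t * c₁ * t⁻¹) * g c := fun c hc => by
    have := proportional_of_countable hB hB' (fun c : B => g c) (fun c : B => g (t * c * t⁻¹))
      (fun x y => hg.mul _ x.2 _ y.2) (fun x y => hconjmul t htA _ x.2 _ y.2)
      ⟨c₁, hc₁B⟩ ⟨c, hc⟩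
    simp only [hc₁] at this
    linarith
  have hm : g (t * c₁ * t⁻¹) = 1 ∨ g (t * c₁ * t⁻¹) = -1 := by
    have h1 := hprop (t⁻¹ * c₁ * t) (by
      have := hconj t⁻¹ (inv_mem htA) c₁ hc₁B
      rwa [inv_inv] at this)
    have h2 : t * (t⁻¹ * c₁ * t) * t⁻¹ = c₁ := by group
    rw [h2, hc₁] at h1
    exact Int.eq_one_or_neg_one_of_mul_eq_one h1.symm
  have htz : ∀ n : ℤ, t ^ n ∈ A := fun n => zpow_mem htA n
  have hftz : ∀ n : ℤ, f (t ^ n) = n := fun n => by rw [hf.map_zpow htA, ht, mul_one]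
  -- the component of `x` in `B`, with respect to the splitting `f x ↦ t ^ f x`
  have hproj : ∀ x ∈ A, x * t ^ (-f x) ∈ B := fun x hx => by
    rw [← hf.zero_iff _ (mul_mem hx (htz _)), hf.mul _ hx _ (htz _), hftz]
    ring
  have hsplit : ∀ x ∈ A, ∀ y ∈ A, g (x * y * t ^ (-f (x * y))) = g (x * t ^ (-f x)) +
      g (t ^ f x * (y * t ^ (-f y)) * (t ^ f x)⁻¹) := fun x hx y hy => by
    rw [← hg.mul _ (hproj x hx) _ (hconj _ (htz _) _ (hproj y hy)), hf.mul _ hx _ hy]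
    congr 1; group
  have hprojB : ∀ c ∈ B, c * t ^ (-f c) = c := fun c hc => by
    rw [(hf.zero_iff c (hf.le hc)).2 hc]; simp
  -- if the constant were `1`, then `g` would extend to `A`, independently of `f`
  have hm' : g (t * c₁ * t⁻¹) = -1 := by
    refine hm.resolve_left fun h1 => ?_
    rw [h1] at hprop
    have hinv : ∀ n : ℤ, ∀ c ∈ B, g (t ^ n * c * (t ^ n)⁻¹) = g c := by
      intro n
      induction n with
      | zero => intro c _; simp
      | succ n ih =>
        intro c hc
        have : t ^ ((n : ℤ) + 1) * c * (t ^ ((n : ℤ) + 1))⁻¹ =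
          t ^ (n : ℤ) * (t * c * t⁻¹) * (t ^ (n : ℤ))⁻¹ := by group
        rw [this, ih _ (hconj t htA c hc), hprop c hc, one_mul]
      | pred n ih =>
        intro c hc
        have : t ^ (-(n : ℤ)) * c * (t ^ (-(n : ℤ)))⁻¹ =
          t * (t ^ (-(n : ℤ) - 1) * c * (t ^ (-(n : ℤ) - 1))⁻¹) * t⁻¹ := by group
        rw [← ih c hc, this, hprop _ (hconj _ (htz _) c hc), one_mul]
    have := proportional_of_countable hA hA' (fun x : A => f x)
      (fun x : A => g (x * t ^ (-f x))) (fun x y => hf.mul _ x.2 _ y.2)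
      (fun x y => by
        rw [Subgroup.coe_mul, hsplit _ x.2 _ y.2, hinv _ _ (hproj _ y.2)])
      ⟨t, htA⟩ ⟨c₁, hf.le hc₁B⟩
    change f t * g (c₁ * t ^ (-f c₁)) = f c₁ * g (t * t ^ (-f t)) at this
    rw [ht, hprojB c₁ hc₁B, hc₁, (hf.zero_iff c₁ (hf.le hc₁B)).2 hc₁B] at this
    omega
  rw [hm'] at hprop
  have hinv : ∀ n : ℤ, ∀ c ∈ B, g (t ^ n * c * (t ^ n)⁻¹) = (n.negOnePow : ℤ) * g c := by
    intro n
    induction n with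
    | zero => intro c _; simp
    | succ n ih =>
      intro c hc
      have : t ^ ((n : ℤ) + 1) * c * (t ^ ((n : ℤ) + 1))⁻¹ =
        t ^ (n : ℤ) * (t * c * t⁻¹) * (t ^ (n : ℤ))⁻¹ := by group
      rw [this, ih _ (hconj t htA c hc), hprop c hc, Int.negOnePow_succ]
      push_cast
      ring
    | pred n ih =>
      intro c hc
      have : t ^ (-(n : ℤ)) * c * (t ^ (-(n : ℤ)))⁻¹ =
        t * (t ^ (-(n : ℤ) - 1) * c * (t ^ (-(n : ℤ) - 1))⁻¹) * t⁻¹ := by group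
      have h2 := ih c hc
      rw [this, hprop _ (hconj _ (htz _) c hc)] at h2
      rw [Int.negOnePow_sub]
      push_cast
      simp only [Int.negOnePow_one, Units.val_neg, Units.val_one]
      linarith
  let θ : A →* KleinBottleGroup :=
    MonoidHom.mk' (fun x => kleinB ^ g (x * t ^ (-f x)) * kleinA ^ f x) (fun x y => by
      rw [klein_mul, Subgroup.coe_mul, hsplit _ x.2 _ y.2, hinv _ _ (hproj _ y.2),
        hf.mul _ x.2 _ y.2])
  refine ⟨θ, fun k => ?_, ?_⟩
  · obtain ⟨j, i, rfl⟩ := klein_normal_form k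
    have hcB : c₁ ^ j ∈ B := zpow_mem hc₁B j
    refine ⟨⟨c₁ ^ j * t ^ i, mul_mem (hf.le hcB) (htz i)⟩, ?_⟩
    have h1 : f (c₁ ^ j * t ^ i) = i := by
      rw [hf.mul _ (hf.le hcB) _ (htz i), hftz, (hf.zero_iff _ (hf.le hcB)).2 hcB, zero_add]
    change kleinB ^ g (c₁ ^ j * t ^ i * t ^ (-f (c₁ ^ j * t ^ i))) *
      kleinA ^ f (c₁ ^ j * t ^ i) = _
    rw [h1, mul_assoc (c₁ ^ j), ← zpow_add, add_neg_cancel, zpow_zero, mul_one,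
      hg.map_zpow hc₁B, hc₁, mul_one]
  · ext x
    rw [MonoidHom.mem_ker, Subgroup.mem_subgroupOf]
    constructor
    · intro h
      obtain ⟨h1, h2⟩ := klein_eq_one h
      have hxB : (x : G) ∈ B := (hf.zero_iff _ x.2).1 h2
      rw [hprojB _ hxB] at h1
      exact (hg.zero_iff _ hxB).1 h1
    · intro h
      have hxB := hg.le h
      change kleinB ^ g (x * t ^ (-f x)) * kleinA ^ f x = 1
      rw [hprojB _ hxB, (hg.zero_iff _ hxB).2 h, (hf.zero_iff _ x.2).2 hxB]
      simp

end KleinStep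

/-! ### The series of a group with regular cones -/

section Forward

variable {G : Type*} [Group G]

/-- Encoding of an epimorphism onto `ℤ` as a function on the ambient group, with value `0`
outside `A`. -/
lemma exists_isZStep {A B : Subgroup G} (hBA : B ≤ A) (φ : A →* Multiplicative ℤ)
    (hφ : Function.Surjective φ) (hker : φ.ker = B.subgroupOf A) : ∃ f, IsZStep A B f := by
  classical
  let f : G → ℤ := fun x => if h : x ∈ A then (φ ⟨x, h⟩).toAdd else 0
  have hf : ∀ x (h : x ∈ A), f x = (φ ⟨x, h⟩).toAdd := fun x h => dif_pos h
  refine ⟨f, hBA, fun x hx y hy => ?_, fun x hx => ?_, ?_⟩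
  · rw [hf x hx, hf y hy, hf _ (mul_mem hx hy), ← toAdd_mul, ← map_mul]
    rfl
  · rw [hf x hx, toAdd_eq_zero, ← MonoidHom.mem_ker, hker, Subgroup.mem_subgroupOf]
  · obtain ⟨t, ht⟩ := hφ (Multiplicative.ofAdd 1)
    exact ⟨t, t.2, by rw [hf _ t.2, ht]; rfl⟩

lemma IsZStep.hom_surjective {A B : Subgroup G} {f : G → ℤ} (h : IsZStep A B f) :
    Function.Surjective h.hom := fun n => by
  obtain ⟨t, ht, h1⟩ := h.surj
  refine ⟨⟨t ^ n.toAdd, zpow_mem ht _⟩, ?_⟩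
  change Multiplicative.ofAdd (f (t ^ n.toAdd)) = n
  rw [h.map_zpow ht, h1, mul_one]
  rfl

lemma IsZStep.ker_hom {A B : Subgroup G} {f : G → ℤ} (h : IsZStep A B f) :
    h.hom.ker = B.subgroupOf A := by
  ext x
  rw [MonoidHom.mem_ker, Subgroup.mem_subgroupOf, ← h.zero_iff _ x.2]
  exact ofAdd_eq_one

/-- A nontrivial subgroup all of whose positive cones are regular contains another such subgroup
with infinite cyclic quotient. -/
lemma exists_next (C : Subgroup G) (hC : AllConesRegular C) :
    ∃ C' : Subgroup G, AllConesRegular C' ∧ (C ≠ ⊥ → ∃ f, IsZStep C C' f) := by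
  by_cases h : C = ⊥
  · exact ⟨C, hC, fun h' => absurd h h'⟩
  have : Nontrivial C := (Subgroup.nontrivial_iff_ne_bot C).2 h
  obtain ⟨φ, hφ⟩ := hC.exists_surjective_int
  refine ⟨φ.ker.map C.subtype,
    (hC.ker φ hφ).congr (φ.ker.equivMapOfInjective _ C.subtype_injective), fun _ => ?_⟩
  refine exists_isZStep (Subgroup.map_subtype_le _) φ hφ ?_
  ext x
  simp [Subgroup.mem_subgroupOf]

/-- A group all of whose positive cones are regular has a finite subnormal series with infinite
cyclic factors, whose terms again have only regular positive cones. -/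
lemma exists_series (hG : AllConesRegular G) :
    ∃ (n : ℕ) (s : ℕ → Subgroup G), s 0 = ⊤ ∧ s n = ⊥ ∧ (∀ i, AllConesRegular (s i)) ∧
      ∀ i < n, ∃ f, IsZStep (s i) (s (i + 1)) f := by
  classical
  choose next h1 h2 using fun C : {C : Subgroup G // AllConesRegular C} => exists_next C.1 C.2
  let S : ℕ → {C : Subgroup G // AllConesRegular C} :=
    fun n => n.rec ⟨⊤, hG.congr Subgroup.topEquiv.symm⟩ fun _ C => ⟨next C, h1 C⟩
  have hstep : ∀ i, (S i).1 ≠ ⊥ → ∃ f, IsZStep (S i).1 (S (i + 1)).1 f := fun i => h2 (S i)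
  by_cases hex : ∃ n, (S n).1 = ⊥
  · exact ⟨Nat.find hex, fun i => (S i).1, rfl, Nat.find_spec hex, fun i => (S i).2,
      fun i hi => hstep i (Nat.find_min hex hi)⟩
  -- otherwise the chain never stops, which yields uncountably many cones
  · push Not at hex
    choose f hf using fun i => hstep i (hex i)
    exact absurd hG.countable (not_countable_of_chain (fun i => (S i).1) f rfl hf hG.1)

lemma AllConesRegular.exists_klein_series (hG : AllConesRegular G) :
    ∃ (n : ℕ) (s : ℕ → Subgroup G), s 0 = ⊤ ∧ s n = ⊥ ∧
      (∀ i < n, s (i + 1) ≤ s i ∧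
        ∃ φ : ↥(s i) →* Multiplicative ℤ, Function.Surjective φ ∧
          φ.ker = (s (i + 1)).subgroupOf (s i)) ∧
      (∀ i, i + 2 ≤ n → s (i + 2) ≤ s i ∧
        ∃ ψ : ↥(s i) →* KleinBottleGroup, Function.Surjective ψ ∧
          ψ.ker = (s (i + 2)).subgroupOf (s i)) := by
  obtain ⟨n, s, h0, hn, hreg, hstep⟩ := exists_series hG
  refine ⟨n, s, h0, hn, fun i hi => ?_, fun i hi => ?_⟩
  · obtain ⟨f, hf⟩ := hstep i hi
    exact ⟨hf.le, hf.hom, hf.hom_surjective, hf.ker_hom⟩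
  · obtain ⟨f, hf⟩ := hstep i (by omega)
    obtain ⟨g, hg⟩ := hstep (i + 1) (by omega)
    exact exists_klein_hom hf hg (hreg i).countable (hreg i).1 (hreg (i + 1)).countable
      (hreg (i + 1)).1

end Forward

/-! ### Regularity of the cones of an iterated Klein bottle extension -/

section Converse

variable {G : Type*} [Group G]

/-- If `A / D` is the Klein bottle group, then `B / D` is its unique normal subgroup with quotient
`ℤ`, generated by `b`, so any element of `A` that generates `A / B` acts on
`B / D` by inversion. -/
lemma conj_eq_neg_of_klein {A B D : Subgroup G} {f g : G → ℤ} (hf : IsZStep A B f)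
    (hg : IsZStep B D g) (ψ : A →* KleinBottleGroup) (hψ : Function.Surjective ψ)
    (hker : ψ.ker = D.subgroupOf A) {t : G} (ht : t ∈ A) (hft : IsUnit (f t)) {c : G}
    (hc : c ∈ B) : t * c * t⁻¹ ∈ B ∧ g (t * c * t⁻¹) = - g c := by
  have hfA : ∀ x y : A, f (x * y : A) = f x + f y := fun x y => hf.mul _ x.2 _ y.2
  have hfinv : ∀ x : A, f (x⁻¹ : A) = - f x := fun x => hf.map_inv x.2
  have hfz : ∀ (x : A) (n : ℤ), f (x ^ n : A) = n * f x := fun x n => hf.map_zpow x.2 n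
  have hD : ∀ x : A, ψ x = 1 → (x : G) ∈ D := fun x hx => by
    rw [← MonoidHom.mem_ker, hker, Subgroup.mem_subgroupOf] at hx
    exact hx
  have hfD : ∀ x : A, ψ x = 1 → f x = 0 := fun x hx =>
    (hf.zero_iff _ x.2).2 (hg.le (hD x hx))
  obtain ⟨α, hα⟩ := hψ kleinA
  obtain ⟨β, hβ⟩ := hψ kleinB
  have hfβ : f β = 0 := by
    have := hfD (α * β * α⁻¹ * β) (by
      rw [map_mul, map_mul, map_mul, map_inv, hα, hβ, klein_rel])
    rw [hfA, hfA, hfA, hfinv] at this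
    omega
  have hexp : ∀ (x : A) (j i : ℤ), ψ x = kleinB ^ j * kleinA ^ i → f x = i * f α := by
    intro x j i hx
    have := hfD (x * (β ^ j * α ^ i)⁻¹) (by
      rw [map_mul, map_inv, map_mul, map_zpow, map_zpow, hα, hβ, hx, mul_inv_cancel])
    rw [hfA, hfinv, hfA, hfz, hfz, hfβ] at this
    linarith
  have hcA := hf.le hc
  have hfc : f c = 0 := (hf.zero_iff c hcA).2 hc
  obtain ⟨j, k, htk⟩ := klein_normal_form (ψ ⟨t, ht⟩)
  obtain ⟨l, i, hci⟩ := klein_normal_form (ψ ⟨c, hcA⟩)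
  have h1 : f t = k * f α := hexp _ _ _ htk
  have h2 : f c = i * f α := hexp _ _ _ hci
  rw [h1] at hft
  have hk : IsUnit k := isUnit_of_mul_isUnit_left hft
  have hα0 : f α ≠ 0 := (isUnit_of_mul_isUnit_right hft).ne_zero
  have hi : i = 0 := by
    rw [hfc] at h2
    exact (mul_eq_zero.1 h2.symm).resolve_right hα0
  subst hi
  rw [zpow_zero, mul_one] at hci
  have hsgn : (k.negOnePow : ℤ) = -1 := by
    rcases Int.isUnit_iff.1 hk with rfl | rfl <;> simp
  have hconjB : t * c * t⁻¹ ∈ B := by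
    rw [← hf.zero_iff _ (mul_mem (mul_mem ht hcA) (inv_mem ht)),
      hf.mul _ (mul_mem ht hcA) _ (inv_mem ht), hf.mul _ ht _ hcA, hf.map_inv ht, hfc]
    ring
  refine ⟨hconjB, ?_⟩
  have hmem := hD ((⟨t, ht⟩ : A) * ⟨c, hcA⟩ * (⟨t, ht⟩ : A)⁻¹ * ⟨c, hcA⟩) (by
    rw [map_mul, map_mul, map_mul, map_inv, htk, hci]
    have h3 := klein_conj k l
    rw [hsgn] at h3
    calc kleinB ^ j * kleinA ^ k * kleinB ^ l * (kleinB ^ j * kleinA ^ k)⁻¹ * kleinB ^ l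
        = kleinB ^ j * (kleinA ^ k * kleinB ^ l * kleinA ^ (-k)) * kleinB ^ (-j) * kleinB ^ l := by
          group
      _ = 1 := by rw [h3]; group)
  have h4 := (hg.zero_iff _ (hg.le hmem)).2 hmem
  change g (t * c * t⁻¹ * c) = 0 at h4
  rw [hg.mul _ hconjB _ hc] at h4
  omega

/-- To show that `P` contains all elements of `A` of positive sign it suffices to treat the coset
of a generator `u ∈ P`. -/
lemma pos_mem_of_key {P : Set G} (hP : IsPositiveCone P) {A B : Subgroup G} {f : G → ℤ}
    (hf : IsZStep A B f) {u : G} (huA : u ∈ A) (huP : u ∈ P) {ε : ℤ} (hεu : ε * f u = 1)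
    (hkey : ∀ c ∈ B, c * u ∈ P) : ∀ g ∈ A, 0 < ε * f g → g ∈ P := by
  have hpow : ∀ n : ℕ, ∀ c ∈ B, c * u ^ (n + 1) ∈ P := by
    intro n
    induction n with
    | zero => intro c hc; simpa using hkey c hc
    | succ n ih =>
      intro c hc
      rw [pow_succ, ← mul_assoc]
      exact hP.1 _ (ih c hc) _ huP
  intro g hg hpos
  obtain ⟨n, hn⟩ : ∃ n : ℕ, ε * f g = n + 1 := ⟨(ε * f g - 1).toNat, by omega⟩
  have hgB : g * (u ^ (n + 1))⁻¹ ∈ B := by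
    have hup := zpow_mem huA ((n : ℤ) + 1)
    have hfu := hf.map_zpow huA ((n : ℤ) + 1)
    have e : u ^ (n + 1) = u ^ ((n : ℤ) + 1) := by
      rw [← zpow_natCast]; push_cast; rfl
    have h2 : ε * (f g - (n + 1) * f u) = 0 := by linear_combination hn - (n + 1) * hεu
    have hε : ε ≠ 0 := by rintro rfl; simp at hεu
    rw [e, ← hf.zero_iff _ (mul_mem hg (inv_mem hup)), hf.mul _ hg _ (inv_mem hup),
      hf.map_inv hup, hfu]
    have := (mul_eq_zero.1 h2).resolve_left hε
    linarith
  have := hpow n _ hgB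
  rwa [inv_mul_cancel_right] at this

/-- There is an element of `P` in `A` generating `A` modulo `B`. -/
lemma exists_pos_generator {P : Set G} (hP : IsPositiveCone P) {A B : Subgroup G} {f : G → ℤ}
    (hf : IsZStep A B f) : ∃ ε : ℤ, ∃ u ∈ A, u ∈ P ∧ ε * f u = 1 := by
  obtain ⟨t, htA, ht⟩ := hf.surj
  rcases hP.2.1 t with h | h | h
  · exact ⟨1, t, htA, h, by rw [ht]; rfl⟩
  · exact ⟨-1, t⁻¹, inv_mem htA, h, by rw [hf.map_inv htA, ht]; rfl⟩
  · rw [h, hf.map_one] at ht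
    exact absurd ht (by norm_num)

/-- In a series with Klein bottle factors, every positive cone `P` is determined by one sign for
each factor: up to sign, `P` contains all elements of positive image in the factor. -/
lemma exists_sign {n : ℕ} {s : ℕ → Subgroup G} {f : ℕ → G → ℤ} (hn : s n = ⊥)
    (hf : ∀ i < n, IsZStep (s i) (s (i + 1)) (f i))
    (hK : ∀ i, i + 2 ≤ n → ∀ t ∈ s i, IsUnit (f i t) → ∀ c ∈ s (i + 1),
      t * c * t⁻¹ ∈ s (i + 1) ∧ f (i + 1) (t * c * t⁻¹) = - f (i + 1) c)
    {P : Set G} (hP : IsPositiveCone P) (k : ℕ) : ∀ i, i + k + 1 = n →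
      ∃ ε : ℤ, ∃ u ∈ s i, u ∈ P ∧ ε * f i u = 1 ∧ ∀ g ∈ s i, 0 < ε * f i g → g ∈ P := by
  induction k with
  | zero =>
    intro i hi
    have hfi := hf i (by omega)
    obtain ⟨ε, u, huA, huP, hu⟩ := exists_pos_generator hP hfi
    refine ⟨ε, u, huA, huP, hu, pos_mem_of_key hP hfi huA huP hu fun c hc => ?_⟩
    have : c = 1 := by
      rw [show i + 1 = n by omega, hn] at hc
      exact Subgroup.mem_bot.1 hc
    rwa [this, one_mul]
  | succ k ih =>
    intro i hi
    have hfi := hf i (by omega)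
    have hfi' := hf (i + 1) (by omega)
    obtain ⟨δ, d, hdB, -, hd, hδ⟩ := ih (i + 1) (by omega)
    obtain ⟨ε, u, huA, huP, hu⟩ := exists_pos_generator hP hfi
    refine ⟨ε, u, huA, huP, hu, pos_mem_of_key hP hfi huA huP hu ?_⟩
    have hunit : IsUnit (f i u⁻¹) := by
      rw [hfi.map_inv huA]
      exact (IsUnit.of_mul_eq_one ε (by rw [mul_comm, hu])).neg
    -- if the sign of `c` is negative, then the conjugate `u⁻¹ c u` is positive
    have hneg : ∀ c ∈ s (i + 1), δ * f (i + 1) c < 0 → c * u ∈ P := fun c hc hlt => by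
      obtain ⟨h1, h2⟩ := hK i (by omega) u⁻¹ (inv_mem huA) hunit c hc
      have h3 : u * (u⁻¹ * c * u⁻¹⁻¹) ∈ P :=
        hP.1 _ huP _ (hδ _ h1 (by rw [h2]; linarith))
      have e : u * (u⁻¹ * c * u⁻¹⁻¹) = c * u := by group
      rwa [e] at h3
    intro c hc
    rcases lt_trichotomy (δ * f (i + 1) c) 0 with h | h | h
    · exact hneg c hc h
    -- an element of trivial sign is split as `(c d) (d⁻¹ u)`
    · have h1 : d⁻¹ * u ∈ P := hneg _ (inv_mem hdB) (by
        rw [hfi'.map_inv hdB]; linarith)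
      have h2 : c * d ∈ P := hδ _ (mul_mem hc hdB) (by
        rw [hfi'.mul _ hc _ hdB]; linarith)
      have h3 := hP.1 _ h2 _ h1
      rwa [mul_assoc, mul_inv_cancel_left] at h3
    · exact hP.1 _ (hδ c hc h) _ huP

/-- The words beginning with `y₀` whose remaining letters satisfy `p` form a regular language. -/
lemma isRegular_cons_all {Y : Type} (y₀ : Y) (p : Y → Prop) :
    Language.IsRegular ({w | ∃ v, w = y₀ :: v ∧ ∀ y ∈ v, p y} : Set (List Y)) := by
  classical
  let M : DFA Y (Option Bool) :=
    { step := fun s y => match s with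
        | none => none
        | some false => if y = y₀ then some true else none
        | some true => if p y then some true else none
      start := some false
      accept := {some true} }
  have hnone : ∀ w, M.evalFrom none w = none := fun w => by
    induction w with
    | nil => rfl
    | cons y w ih => rw [DFA.evalFrom_cons]; exact ih
  have htrue : ∀ w, M.evalFrom (some true) w = some true ↔ ∀ y ∈ w, p y := fun w => by
    induction w with
    | nil => simp
    | cons y w ih =>
      rw [DFA.evalFrom_cons, List.forall_mem_cons, ← ih]
      by_cases hy : p y
      · have : M.step (some true) y = some true := if_pos hy
        simp [this, hy]
      · have : M.step (some true) y = none := if_neg hy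
        simp [this, hy, hnone]
  refine ⟨_, inferInstance, M, ?_⟩
  ext w
  change M.evalFrom (some false) w = some true ↔ ∃ v, w = y₀ :: v ∧ ∀ y ∈ v, p y
  cases w with
  | nil => simp
  | cons y w =>
    rw [DFA.evalFrom_cons]
    by_cases hy : y = y₀
    · have : M.step (some false) y = some true := if_pos hy
      rw [this, htrue, hy]
      simp
    · have : M.step (some false) y = none := if_neg hy
      simp [this, hy, hnone]

lemma isRegular_map_inl {X Y : Type} {L : Language X} (hL : L.IsRegular) :
    Language.IsRegular (List.map Sum.inl '' L : Set (List (X ⊕ Y))) := by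
  obtain ⟨σ, _, M, rfl⟩ := hL
  let N : DFA (X ⊕ Y) (Option σ) :=
    { step := fun s y => match s, y with
        | some q, .inl x => some (M.step q x)
        | _, _ => none
      start := some M.start
      accept := some '' M.accept }
  have hnone : ∀ w, N.evalFrom none w = none := fun w => by
    induction w with
    | nil => rfl
    | cons y w ih => rw [DFA.evalFrom_cons]; exact ih
  have hsome : ∀ w q q', N.evalFrom (some q) w = some q' ↔
      ∃ v, v.map Sum.inl = w ∧ M.evalFrom q v = q' := by
    intro w
    induction w with
    | nil => intro q q'; simp
    | cons y w ih =>
      intro q q'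
      rw [DFA.evalFrom_cons]
      rcases y with x | y
      · have : N.step (some q) (.inl x) = some (M.step q x) := rfl
        rw [this, ih]
        constructor
        · rintro ⟨v, rfl, rfl⟩
          exact ⟨x :: v, rfl, rfl⟩
        · rintro ⟨v, hv, rfl⟩
          obtain ⟨x', v, rfl, hx, rfl⟩ := List.map_eq_cons_iff.1 hv
          cases hx
          exact ⟨v, rfl, rfl⟩
      · have : N.step (some q) (.inr y) = none := rfl
        rw [this, hnone]
        constructor
        · intro h; simp at h
        · rintro ⟨v, hv, -⟩
          obtain ⟨x', v, rfl, hx, rfl⟩ := List.map_eq_cons_iff.1 hv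
          simp at hx
  refine ⟨_, inferInstance, N, ?_⟩
  ext w
  constructor
  · rintro ⟨q, hq, hw⟩
    obtain ⟨v, hv, hv'⟩ := (hsome w M.start q).1 hw.symm
    refine ⟨v, ?_, hv⟩
    change M.evalFrom M.start v ∈ M.accept
    rwa [hv']
  · rintro ⟨v, hv, rfl⟩
    exact ⟨_, hv, ((hsome _ _ _).2 ⟨v, rfl, rfl⟩).symm⟩

/-- `S` is the evaluation of a regular language over a finite set of monoid generators of the
subgroup `A`. -/
def IsRegularIn (A : Subgroup G) (S : Set G) : Prop :=
  ∃ (X : Type) (_ : Fintype X) (π : FreeMonoid X →* G), (∀ w, π w ∈ A) ∧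
    (∀ g ∈ A, ∃ w, π w = g) ∧ ∃ L : Language X, L.IsRegular ∧ evalLang π L = S

/-- A cone that contains all elements of `A` of positive image in the infinite cyclic quotient
`A / B` is regular on `A` as soon as it is on `B`: the elements of positive image are the words
with at least one letter `u` and no letter `u⁻¹`. -/
lemma IsRegularIn.step {P : Set G} (hP : IsPositiveCone P) {A B : Subgroup G} {f : G → ℤ}
    (hf : IsZStep A B f) {u : G} (huA : u ∈ A) {ε : ℤ} (hεu : ε * f u = 1)
    (hpos : ∀ g ∈ A, 0 < ε * f g → g ∈ P) (hB : IsRegularIn B (P ∩ B)) :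
    IsRegularIn A (P ∩ A) := by
  obtain ⟨X, _, π, hπB, hπs, L, hL, hLe⟩ := hB
  let val : X ⊕ Bool → G := Sum.elim (fun x => π (FreeMonoid.of x)) fun b => if b then u else u⁻¹
  let π' : FreeMonoid (X ⊕ Bool) →* G := FreeMonoid.lift val
  have hval : ∀ y, π' (FreeMonoid.of y) = val y := fun y => FreeMonoid.lift_eval_of _ _
  have hvalA : ∀ y, val y ∈ A := by
    rintro (x | b)
    · exact hf.le (hπB _)
    · cases b
      · exact inv_mem huA
      · exact huA
  have hA : ∀ w, π' w ∈ A := fun w => by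
    induction w using FreeMonoid.inductionOn' with
    | one => rw [map_one]; exact one_mem _
    | of_mul y w ih => rw [map_mul, hval]; exact mul_mem (hvalA y) ih
  have hinl : ∀ v : List X, π' (FreeMonoid.ofList (v.map Sum.inl)) = π (FreeMonoid.ofList v) := by
    intro v
    induction v with
    | nil => exact (map_one π').trans (map_one π).symm
    | cons x v ih =>
      rw [List.map_cons, FreeMonoid.ofList_cons, map_mul, ih, hval, FreeMonoid.ofList_cons,
        map_mul]
      rfl
  have hε : ε ≠ 0 := by rintro rfl; simp at hεu
  -- every element of `A` is a power of `u` times an element of `B`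
  have hdec : ∀ g ∈ A, (u ^ (ε * f g))⁻¹ * g ∈ B := fun g hg => by
    have h1 := zpow_mem huA (ε * f g)
    rw [← hf.zero_iff _ (mul_mem (inv_mem h1) hg), hf.mul _ (inv_mem h1) _ hg, hf.map_inv h1,
      hf.map_zpow huA]
    linear_combination -(f g) * hεu
  have hpow : ∀ k : ℕ, π' (FreeMonoid.ofList (List.replicate k (Sum.inr true))) = u ^ k := by
    intro k
    induction k with
    | zero => simp
    | succ k ih =>
      rw [List.replicate_succ, FreeMonoid.ofList_cons, map_mul, ih, hval, pow_succ']
      rfl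
  have hpow' : ∀ k : ℕ, π' (FreeMonoid.ofList (List.replicate k (Sum.inr false))) = u⁻¹ ^ k := by
    intro k
    induction k with
    | zero => simp
    | succ k ih =>
      rw [List.replicate_succ, FreeMonoid.ofList_cons, map_mul, ih, hval, pow_succ']
      rfl
  let L₁ : Language (X ⊕ Bool) :=
    ({w | ∃ v, w = Sum.inr true :: v ∧ ∀ y ∈ v, y ≠ Sum.inr false} : Set (List (X ⊕ Bool)))
  let L₂ : Language (X ⊕ Bool) := (List.map Sum.inl '' L : Set (List (X ⊕ Bool)))
  have hnonneg : ∀ v : List (X ⊕ Bool), (∀ y ∈ v, y ≠ Sum.inr false) →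
      0 ≤ ε * f (π' (FreeMonoid.ofList v)) := by
    intro v
    induction v with
    | nil => intro _; rw [FreeMonoid.ofList_nil, map_one, hf.map_one, mul_zero]
    | cons y v ih =>
      intro hv
      rw [List.forall_mem_cons] at hv
      have h1 := ih hv.2
      rw [FreeMonoid.ofList_cons, map_mul, hval, hf.mul _ (hvalA y) _ (hA _), mul_add]
      have h2 : 0 ≤ ε * f (val y) := by
        rcases y with x | b
        · have : f (val (Sum.inl x)) = 0 := (hf.zero_iff _ (hvalA _)).2 (hπB _)
          rw [this, mul_zero]
        · cases b
          · exact absurd rfl hv.1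
          · change 0 ≤ ε * f u
            rw [hεu]; norm_num
      exact add_nonneg h2 h1
  refine ⟨_, inferInstance, π', hA, fun g hg => ?_, L₁ + L₂,
    (isRegular_cons_all _ _).add (isRegular_map_inl hL), ?_⟩
  · obtain ⟨w, hw⟩ := hπs _ (hdec g hg)
    rw [← FreeMonoid.ofList_toList w, ← hinl] at hw
    obtain ⟨k, hk | hk⟩ := Int.eq_nat_or_neg (ε * f g)
    · refine ⟨FreeMonoid.ofList (List.replicate k (Sum.inr true)) *
        FreeMonoid.ofList (List.map Sum.inl w.toList), ?_⟩
      rw [map_mul, hw, hpow, hk, zpow_natCast, mul_inv_cancel_left]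
    · refine ⟨FreeMonoid.ofList (List.replicate k (Sum.inr false)) *
        FreeMonoid.ofList (List.map Sum.inl w.toList), ?_⟩
      rw [map_mul, hw, hpow', hk, zpow_neg, zpow_natCast, inv_pow, mul_inv_cancel_left]
  · ext g
    constructor
    · rintro ⟨w, hw | hw, rfl⟩
      · obtain ⟨v, rfl, hv⟩ := hw
        refine ⟨hpos _ (hA _) ?_, hA _⟩
        change 0 < ε * f (π' (FreeMonoid.ofList (Sum.inr true :: v)))
        rw [FreeMonoid.ofList_cons, map_mul, hval, hf.mul _ (hvalA _) _ (hA _), mul_add]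
        have h1 := hnonneg v hv
        change 0 < ε * f u + _
        rw [hεu]
        linarith
      · obtain ⟨v, hv, rfl⟩ := hw
        have : π (FreeMonoid.ofList v) ∈ P ∩ (B : Set G) := by
          rw [← hLe]; exact ⟨v, hv, rfl⟩
        change π' (FreeMonoid.ofList (List.map Sum.inl v)) ∈ P ∩ (A : Set G)
        rw [hinl]
        exact ⟨this.1, hf.le this.2⟩
    · rintro ⟨hgP, hgA⟩
      rcases lt_trichotomy (ε * f g) 0 with h | h | h
      · refine absurd (hpos g⁻¹ (inv_mem hgA) ?_) (hP.2.2.1 g hgP)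
        rw [hf.map_inv hgA]
        linarith
      · have hgB : g ∈ B := (hf.zero_iff g hgA).1 ((mul_eq_zero.1 h).resolve_left hε)
        have : g ∈ evalLang π L := by rw [hLe]; exact ⟨hgP, hgB⟩
        obtain ⟨v, hv, rfl⟩ := this
        exact ⟨_, Or.inr ⟨v, hv, rfl⟩, hinl v⟩
      · obtain ⟨w, hw⟩ := hπs _ (hdec g hgA)
        rw [← FreeMonoid.ofList_toList w, ← hinl] at hw
        obtain ⟨k, hk⟩ : ∃ k : ℕ, ε * f g = (k + 1 : ℕ) := ⟨(ε * f g - 1).toNat, by omega⟩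
        refine ⟨List.replicate (k + 1) (Sum.inr true) ++ List.map Sum.inl w.toList,
          Or.inl ⟨List.replicate k (Sum.inr true) ++ List.map Sum.inl w.toList,
            rfl, fun y hy => ?_⟩, ?_⟩
        · rcases List.mem_append.1 hy with hy | hy
          · rw [List.eq_of_mem_replicate hy]; simp
          · obtain ⟨x, -, rfl⟩ := List.mem_map.1 hy
            simp
        · change π' (FreeMonoid.ofList (_ ++ _)) = g
          rw [FreeMonoid.ofList_append, map_mul, hw, hpow, hk, zpow_natCast, mul_inv_cancel_left]

/-- Conversely, a series as in the theorem makes `G` left-orderable with only regular cones. -/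
lemma allConesRegular_of_klein_series {n : ℕ} {s : ℕ → Subgroup G} (h0 : s 0 = ⊤) (hn : s n = ⊥)
    (hZ : ∀ i < n, s (i + 1) ≤ s i ∧
      ∃ φ : ↥(s i) →* Multiplicative ℤ, Function.Surjective φ ∧
        φ.ker = (s (i + 1)).subgroupOf (s i))
    (hKl : ∀ i, i + 2 ≤ n → s (i + 2) ≤ s i ∧
      ∃ ψ : ↥(s i) →* KleinBottleGroup, Function.Surjective ψ ∧
        ψ.ker = (s (i + 2)).subgroupOf (s i)) : AllConesRegular G := by
  have hZ' : ∀ i, ∃ f, i < n → IsZStep (s i) (s (i + 1)) f := fun i => by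
    by_cases hi : i < n
    · obtain ⟨hle, φ, hφ, hker⟩ := hZ i hi
      obtain ⟨f, hf⟩ := exists_isZStep hle φ hφ hker
      exact ⟨f, fun _ => hf⟩
    · exact ⟨0, fun h => absurd h hi⟩
  choose f hf using hZ'
  refine ⟨?_, fun P hP => ?_⟩
  · classical
    have hs' : ∀ i, s (min (i + 1) n) ≤ s (min i n) := fun i => by
      by_cases hi : i < n
      · rw [min_eq_left hi.le, min_eq_left (Nat.succ_le_of_lt hi)]
        exact (hf i hi).le
      · rw [min_eq_right (by omega), min_eq_right (by omega)]
    refine ⟨_, isPositiveCone_of_chain (fun i => s (min i n)) (fun i => if i < n then f i else 0)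
      (by simpa using h0) (antitone_nat_of_succ_le hs') (fun i x hx y hy => ?_)
      (fun i x hx => ?_) ∅ ⟨by simp, by simp, fun g hg => ?_, by simp, by simp⟩⟩
    · by_cases hi : i < n
      · simp only [min_eq_left hi.le] at hx hy
        simp only [if_pos hi]
        exact (hf i hi).mul x hx y hy
      · simp [hi]
    · by_cases hi : i < n
      · simp only [min_eq_left hi.le] at hx
        simp only [if_pos hi, min_eq_left (Nat.succ_le_of_lt hi)]
        exact (hf i hi).zero_iff x hx
      · have h1 : min i n = n := min_eq_right (by omega)
        have h2 : min (i + 1) n = n := min_eq_right (by omega)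
        simp only [h1] at hx
        simp [hi, h2, hx]
    · have := (Subgroup.mem_iInf.1 hg) n
      simp only [min_self, hn] at this
      exact Or.inr (Or.inr (Subgroup.mem_bot.1 this))
  · have hK : ∀ i, i + 2 ≤ n → ∀ t ∈ s i, IsUnit (f i t) → ∀ c ∈ s (i + 1),
        t * c * t⁻¹ ∈ s (i + 1) ∧ f (i + 1) (t * c * t⁻¹) = - f (i + 1) c := by
      intro i hi t ht hft c hc
      obtain ⟨-, ψ, hψ, hker⟩ := hKl i hi
      exact conj_eq_neg_of_klein (hf i (by omega)) (hf (i + 1) (by omega)) ψ hψ hker ht hft hc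
    have hreg : ∀ k i, i + k = n → IsRegularIn (s i) (P ∩ s i) := by
      intro k
      induction k with
      | zero =>
        intro i hi
        rw [show i = n by omega, hn]
        refine ⟨Empty, inferInstance, 1, fun _ => one_mem _,
          fun g hg => ⟨1, by rw [Subgroup.mem_bot.1 hg, map_one]⟩, 0,
          ⟨Unit, inferInstance, ⟨fun _ _ => (), (), ∅⟩, rfl⟩, ?_⟩
        ext g
        constructor
        · rintro ⟨w, hw, -⟩
          exact absurd hw (Set.notMem_empty w)
        · rintro ⟨hgP, hg⟩
          rw [Subgroup.mem_bot.1 hg] at hgP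
          exact absurd hgP hP.2.2.2
      | succ k ih =>
        intro i hi
        obtain ⟨ε, u, huA, -, hu, hpos⟩ := exists_sign hn hf hK hP k i (by omega)
        exact (ih (i + 1) (by omega)).step hP (hf i (by omega)) huA hu hpos
    obtain ⟨X, hX, π, -, hπ, L, hL, hLe⟩ := hreg n 0 (by omega)
    rw [h0] at hπ hLe
    exact ⟨X, hX, π, fun g => hπ g trivial, L, hL, by simpa using hLe⟩

end Converse

/-- A finitely generated group `G` is left-orderable with all of its positive cones
regular if and only if `G` admits a subnormal series `G = G₀ ⊵ G₁ ⊵ … ⊵ Gₙ = {1}` with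
each `G_i/G_{i+1}` infinite cyclic and each `G_i/G_{i+2}` isomorphic to the Klein
bottle group (quotients are expressed via surjections with prescribed kernel). -/
theorem stmt13 {G : Type*} [Group G] (X : Type) [Fintype X] (π : FreeMonoid X →* G)
    (hπ : Function.Surjective π) :
    ((∃ P : Set G, IsPositiveCone P) ∧
        (∀ P : Set G, IsPositiveCone P → HasRegularConeEval P)) ↔
      (∃ (n : ℕ) (s : ℕ → Subgroup G), s 0 = ⊤ ∧ s n = ⊥ ∧
        (∀ i < n, s (i + 1) ≤ s i ∧
          ∃ φ : ↥(s i) →* Multiplicative ℤ, Function.Surjective φ ∧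
            φ.ker = (s (i + 1)).subgroupOf (s i)) ∧
        (∀ i, i + 2 ≤ n → s (i + 2) ≤ s i ∧
          ∃ ψ : ↥(s i) →* KleinBottleGroup, Function.Surjective ψ ∧
            ψ.ker = (s (i + 2)).subgroupOf (s i))) := by
  exact ⟨fun h => AllConesRegular.exists_klein_series h,
    fun ⟨_, _, h0, hn, hZ, hK⟩ => allConesRegular_of_klein_series h0 hn hZ hK⟩
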